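/- Let n ≥ 3 and let Q₀ be a real quadratic form on ℝ^n satisfying the volume asymptotic condition with constant c₀ > 0. Then for every δ > 0, for Haar-almost every g ∈ SL(n,ℝ), there exists ε₀ > 0 such that for every ε with 0 < ε < ε₀ there is a nonzero x ∈ ℤ^n with ‖gx‖ < ε^{-(1/(n-2) + δ)} and 0 < Q₀(gx) < ε. -/

import Mathlib

open MeasureTheory Matrix Filter Asymptotics

/-- The Euclidean norm of a vector in `ℝ^n`. -/
noncomputable def euclNorm {n : ℕ} (x : Fin n → ℝ) : ℝ := Real.sqrt (∑ i, x i ^ 2)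

/-- The quadratic form `x ↦ xᵀ M x` attached to a matrix `M`. -/
def Qform {n : ℕ} (M : Matrix (Fin n) (Fin n) ℝ) (x : Fin n → ℝ) : ℝ := x ⬝ᵥ M.mulVec x

/-- The quadratic form of `M` satisfies the volume asymptotic condition with constant `c₀`:
for all `a < b`, `|Q₀⁻¹((a,b)) ∩ B(0,T)| = c₀ (b-a) T^{n-2} + o(T^{n-2})` as `T → ∞`. -/
def volumeAsymp {n : ℕ} (M : Matrix (Fin n) (Fin n) ℝ) (c₀ : ℝ) : Prop :=
  ∀ a b : ℝ, a < b →
    (fun T : ℝ =>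
        (volume {x : Fin n → ℝ | Qform M x ∈ Set.Ioo a b ∧ euclNorm x ≤ T}).toReal
          - c₀ * (b - a) * T ^ (n - 2)) =o[atTop] fun T : ℝ => T ^ (n - 2)

/-- `SL(n, ℝ)`. -/
abbrev SLR (n : ℕ) := Matrix.SpecialLinearGroup (Fin n) ℝ

instance (n : ℕ) : TopologicalSpace (SLR n) :=
  TopologicalSpace.induced (fun g : SLR n => (g : Matrix (Fin n) (Fin n) ℝ)) inferInstance

noncomputable instance (n : ℕ) : MeasurableSpace (SLR n) := borel _

/-!
The engine is a random Minkowski theorem: for `n ≥ 3` and an open set `A ∌ 0` of `ℝⁿ`, the set of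
matrices `h` in a fixed box (bounded entries, determinant bounded away from `0`) whose lattice
`h ℤⁿ` misses `A` has volume `O(1 / vol A)`.

To prove it, average over Hecke neighbours instead of over the space of lattices. For a prime
`p ≈ Nⁿ` and a random vector `ξ` modulo `p`, consider the sublattice `{g x : ξ ⬝ x ≡ 0 mod p}` of
`g ℤⁿ`, scaled by `N⁻¹`. It contains `N⁻¹ g x` exactly when `ξ ⬝ x ≡ 0`, and for the
`≈ Nⁿ vol A / |det g|` primitive `x` with `N⁻¹ g x ∈ A` these events have probability `1 / p` and
are pairwise independent up to sign. By Chebyshev, the proportion of `ξ` whose sublattice misses `A`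
is `O(|det g| / vol A)`.

To pass from these sublattices to `h ℤⁿ` itself, note that at least half of the Hecke neighbours of
`ℤⁿ` have no short vector, hence by Minkowski's theorem contain a bounded frame of bounded index. If
`h ℤⁿ` misses `A`, then so does the sublattice of some `g = h F` attached to that frame, each `ξ`
arising boundedly often. The change of variables `h ↦ h F` and the limit `N → ∞` give the bound.

Applied to `A_k = {0 < Q < 2⁻ᵏ, ‖v‖ < 2^(β k)}` with `β > 1 / (n - 2)`, whose volume grows
geometrically by the volume asymptotic condition and homogeneity, the Borel–Cantelli lemma shows
that the lattice of almost every invertible matrix meets `A_k` for all large `k`. Up to constants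
this property is invariant under scaling, so it passes to almost every element of `SL(n, ℝ)`: the
volume of the cone over a set is a left-invariant measure on `SL(n, ℝ)`, hence has the same null
sets as Haar measure.
-/

section SecondMoment

open Finset

variable {Ω α : Type*} [Fintype Ω] [DecidableEq Ω] (E : α → Finset Ω) (S : Finset α)

lemma sum_card_filter_mem : ∑ ω, #{x ∈ S | ω ∈ E x} = ∑ x ∈ S, #(E x) := by
  simp only [card_filter]
  rw [sum_comm]
  simp

lemma sum_card_filter_mem_sq :
    ∑ ω, #{x ∈ S | ω ∈ E x} ^ 2 = ∑ x ∈ S, ∑ y ∈ S, #(E x ∩ E y) := by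
  simp only [card_filter, sq, sum_mul_sum]
  rw [sum_comm]
  refine sum_congr rfl fun x _ => ?_
  rw [sum_comm]
  refine sum_congr rfl fun y _ => ?_
  simp [← ite_and, filter_and, inter_comm]

variable {E S} {q k : ℕ}

lemma sum_card_filter_mem_sq_le (hE : ∀ x ∈ S, (#(E x) : ℝ) = Fintype.card Ω / q)
    (hpair : ∀ x ∈ S, #{y ∈ S | (Fintype.card Ω : ℝ) / q ^ 2 < #(E x ∩ E y)} ≤ k) :
    ∑ ω, (#{x ∈ S | ω ∈ E x} : ℝ) ^ 2 ≤
      #S ^ 2 * (Fintype.card Ω / q ^ 2) + k * #S * (Fintype.card Ω / q) := by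
  have hpoint : ∀ x ∈ S, ∀ y ∈ S, (#(E x ∩ E y) : ℝ) ≤
      Fintype.card Ω / q ^ 2 + if (Fintype.card Ω : ℝ) / q ^ 2 < #(E x ∩ E y) then
        (Fintype.card Ω : ℝ) / q else 0 := by
    intro x hx y _
    split_ifs with hxy
    · have hsub : (#(E x ∩ E y) : ℝ) ≤ #(E x) := mod_cast card_le_card inter_subset_left
      have : (0 : ℝ) ≤ Fintype.card Ω / q ^ 2 := by positivity
      linarith [hE x hx]
    · linarith
  have hrow : ∀ x ∈ S, ∑ y ∈ S, (#(E x ∩ E y) : ℝ) ≤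
      #S * (Fintype.card Ω / q ^ 2) + k * (Fintype.card Ω / q) := by
    intro x hx
    refine (sum_le_sum (hpoint x hx)).trans ?_
    rw [sum_add_distrib, sum_const, nsmul_eq_mul, ← sum_filter, sum_const, nsmul_eq_mul]
    gcongr
    exact hpair x hx
  calc ∑ ω, (#{x ∈ S | ω ∈ E x} : ℝ) ^ 2
      = ∑ x ∈ S, ∑ y ∈ S, (#(E x ∩ E y) : ℝ) := mod_cast sum_card_filter_mem_sq E S
    _ ≤ ∑ _ ∈ S, (#S * ((Fintype.card Ω : ℝ) / q ^ 2) + k * (Fintype.card Ω / q)) :=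
        sum_le_sum hrow
    _ = _ := by rw [sum_const, nsmul_eq_mul]; ring

lemma sum_card_filter_mem_sub_sq_le (hq : q ≠ 0)
    (hE : ∀ x ∈ S, (#(E x) : ℝ) = Fintype.card Ω / q)
    (hpair : ∀ x ∈ S, #{y ∈ S | (Fintype.card Ω : ℝ) / q ^ 2 < #(E x ∩ E y)} ≤ k) :
    ∑ ω, ((#{x ∈ S | ω ∈ E x} : ℝ) - #S / q) ^ 2 ≤ k * #S * (Fintype.card Ω / q) := by
  have hmean : ∑ ω, (#{x ∈ S | ω ∈ E x} : ℝ) = #S * (Fintype.card Ω / q) := by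
    rw [← nsmul_eq_mul, ← sum_const, ← sum_congr rfl hE]
    exact mod_cast sum_card_filter_mem E S
  calc ∑ ω, ((#{x ∈ S | ω ∈ E x} : ℝ) - #S / q) ^ 2
      = ∑ ω, (#{x ∈ S | ω ∈ E x} : ℝ) ^ 2 - 2 * (#S / q) * ∑ ω, (#{x ∈ S | ω ∈ E x} : ℝ)
          + Fintype.card Ω * (#S / q) ^ 2 := by
        simp only [sub_sq, sum_add_distrib, sum_sub_distrib, mul_sum, sum_const, card_univ,
          nsmul_eq_mul]
        congr 2
        exact sum_congr rfl fun ω _ => by ring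
    _ ≤ _ := by
        have hcancel : (#S : ℝ) ^ 2 * (Fintype.card Ω / q ^ 2)
            - 2 * (#S / q) * (#S * (Fintype.card Ω / q)) + Fintype.card Ω * (#S / q) ^ 2 = 0 := by
          field_simp; ring
        rw [hmean]
        linarith [sum_card_filter_mem_sq_le hE hpair]

/-- Chebyshev's inequality for the number `#{x ∈ S | ω ∈ E x}` of events that occur. -/
theorem card_forall_notMem_mul_card_le (hq : q ≠ 0)
    (hE : ∀ x ∈ S, #(E x) * q = Fintype.card Ω)
    (hpair : ∀ x ∈ S, #{y ∈ S | Fintype.card Ω < #(E x ∩ E y) * q ^ 2} ≤ k) :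
    #{ω | ∀ x ∈ S, ω ∉ E x} * #S ≤ k * q * Fintype.card Ω := by
  have hq0 : (0 : ℝ) < q := by positivity
  have hvar : ∑ ω, ((#{x ∈ S | ω ∈ E x} : ℝ) - #S / q) ^ 2 ≤ k * #S * (Fintype.card Ω / q) := by
    refine sum_card_filter_mem_sub_sq_le hq (fun x hx => ?_) fun x hx => ?_
    · rw [eq_div_iff hq0.ne']
      exact mod_cast hE x hx
    · simp only [div_lt_iff₀ (pow_pos hq0 2)]
      exact mod_cast hpair x hx
  have havoid : (#{ω | ∀ x ∈ S, ω ∉ E x} : ℝ) * (#S / q) ^ 2 ≤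
      ∑ ω, ((#{x ∈ S | ω ∈ E x} : ℝ) - #S / q) ^ 2 := by
    rw [← nsmul_eq_mul, ← sum_const]
    refine (sum_le_sum fun ω hω => ?_).trans
      (sum_le_sum_of_subset_of_nonneg (filter_subset _ _) fun _ _ _ => sq_nonneg _)
    rw [filter_eq_empty_iff.2 fun {x} hx => (mem_filter.1 hω).2 x hx]
    simp
  obtain hS | hS := (#S).eq_zero_or_pos
  · simp [hS]
  have h := calc (#{ω | ∀ x ∈ S, ω ∉ E x} * #S : ℝ) * (#S / q ^ 2)
      = (#{ω | ∀ x ∈ S, ω ∉ E x} : ℝ) * (#S / q) ^ 2 := by ring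
    _ ≤ (k : ℝ) * #S * (Fintype.card Ω / q) := havoid.trans hvar
    _ = (k * q * Fintype.card Ω : ℝ) * (#S / q ^ 2) := by field_simp
  have hreal := le_of_mul_le_mul_right h (by positivity)
  exact mod_cast hreal

end SecondMoment

section FiniteField

open Finset

variable {F ι : Type*} [Field F] [Fintype F] [DecidableEq F] [Fintype ι] [DecidableEq ι]

theorem card_forall_dotProduct_eq_zero_mul {κ : Type*} [Fintype κ] {v : κ → ι → F}
    (hv : LinearIndependent F v) :
    #{ξ : ι → F | ∀ k, ξ ⬝ᵥ v k = 0} * Fintype.card F ^ Fintype.card κ =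
      Fintype.card F ^ Fintype.card ι := by
  have hrank : (Matrix.of v).rank = Fintype.card κ := hv.rank_matrix
  have hker : #{ξ : ι → F | ∀ k, ξ ⬝ᵥ v k = 0} =
      Fintype.card F ^ Module.finrank F (LinearMap.ker (Matrix.of v).mulVecLin) := by
    rw [← Nat.card_eq_fintype_card (α := F), ← Module.natCard_eq_pow_finrank]
    refine (Nat.subtype_card _ fun ξ => ?_).symm
    simp [funext_iff, mulVec, dotProduct_comm]
  have hnullity := (Matrix.of v).mulVecLin.finrank_range_add_finrank_ker
  rw [← Matrix.rank, hrank, Module.finrank_fintype_fun_eq_card] at hnullity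
  rw [hker, ← pow_add, add_comm, hnullity]

theorem card_forall_dotProduct_ne_zero_mul_card_le {k : ℕ} (S : Finset (ι → F))
    (hS : ∀ x ∈ S, x ≠ 0)
    (hpair : ∀ x ∈ S, ∃ T : Finset (ι → F), #T ≤ k ∧
      ∀ y ∈ S, y ∉ T → LinearIndependent F ![x, y]) :
    #{ξ : ι → F | ∀ x ∈ S, ξ ⬝ᵥ x ≠ 0} * #S ≤
      k * Fintype.card F * Fintype.card F ^ Fintype.card ι := by
  set E : (ι → F) → Finset (ι → F) := fun x => {ξ | ξ ⬝ᵥ x = 0} with hEdef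
  have hE : ∀ x ∈ S, #(E x) * Fintype.card F = Fintype.card (ι → F) := by
    intro x hx
    have hli : LinearIndependent F ![x] := LinearIndependent.of_subsingleton 0 (hS x hx)
    simpa [hEdef] using card_forall_dotProduct_eq_zero_mul hli
  have hEE : ∀ x ∈ S, #{y ∈ S | Fintype.card (ι → F) < #(E x ∩ E y) * Fintype.card F ^ 2} ≤ k := by
    intro x hx
    obtain ⟨T, hTk, hT⟩ := hpair x hx
    refine (card_le_card fun y hy => ?_).trans hTk
    by_contra hyT
    obtain ⟨hyS, hlt⟩ := mem_filter.1 hy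
    have h := card_forall_dotProduct_eq_zero_mul (hT y hyS hyT)
    simp only [Fin.forall_fin_two, Fintype.card_fin, filter_and, cons_val_zero, cons_val_one] at h
    simp [hEdef, h] at hlt
  simpa [hEdef] using card_forall_notMem_mul_card_le Fintype.card_ne_zero hE hEE

end FiniteField

section Minkowski

lemma mem_span_int_range_basisFun_iff {ι : Type*} [Finite ι] {x : ι → ℝ} :
    x ∈ Submodule.span ℤ (Set.range (Pi.basisFun ℝ ι)) ↔
      ∃ z : ι → ℤ, (fun i => (z i : ℝ)) = x := by
  rw [(Pi.basisFun ℝ ι).mem_span_iff_repr_mem ℤ]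
  simp [funext_iff, Classical.skolem]

variable {ι : Type*} [Fintype ι]

lemma exists_dotProduct_eq_zero_of_ne_top {p : Submodule ℝ (ι → ℝ)} (hp : p ≠ ⊤) :
    ∃ (c : ι → ℝ) (i₀ : ι), c i₀ = 1 ∧ (∀ i, |c i| ≤ 1) ∧ ∀ w ∈ p, c ⬝ᵥ w = 0 := by
  classical
  obtain ⟨φ, hφ0, hφ⟩ := Submodule.exists_le_ker_of_lt_top _ hp.lt_top
  obtain ⟨f, rfl⟩ := (dotProductEquiv ℝ ι).surjective φ
  have hf0 : f ≠ 0 := fun h => hφ0 (by simp [h])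
  obtain ⟨i, hi⟩ := Function.ne_iff.1 hf0
  have : Nonempty ι := ⟨i⟩
  obtain ⟨i₀, hi₀⟩ := Finite.exists_max fun i => |f i|
  have hfi₀ : f i₀ ≠ 0 := fun h => hi (by simpa [h] using hi₀ i)
  refine ⟨(f i₀)⁻¹ • f, i₀, inv_mul_cancel₀ hfi₀, fun i => ?_, fun w hw => ?_⟩
  · rw [Pi.smul_apply, smul_eq_mul, abs_mul, abs_inv, inv_mul_le_one₀ (abs_pos.2 hfi₀)]
    exact hi₀ i
  · have hfw : f ⬝ᵥ w = 0 := hφ hw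
    rw [smul_dotProduct, hfw, smul_zero]

lemma abs_dotProduct_sub_le {c w : ι → ℝ} {i₀ : ι} {t : ℝ} (hi₀ : c i₀ = 1)
    (hc : ∀ i, |c i| ≤ 1) (hw : ∀ i, i ≠ i₀ → |w i| ≤ t) :
    |c ⬝ᵥ w - w i₀| ≤ (Fintype.card ι - 1 : ℝ) * t := by
  classical
  have hsplit : c ⬝ᵥ w - w i₀ = ∑ i ∈ Finset.univ.erase i₀, c i * w i := by
    rw [dotProduct, ← Finset.add_sum_erase _ _ (Finset.mem_univ i₀), hi₀]
    ring
  calc |c ⬝ᵥ w - w i₀| ≤ ∑ i ∈ Finset.univ.erase i₀, |c i * w i| := by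
        rw [hsplit]; exact Finset.abs_sum_le_sum_abs _ _
    _ ≤ ∑ _ ∈ Finset.univ.erase i₀, t := by
        refine Finset.sum_le_sum fun i hi => ?_
        rw [abs_mul]
        exact (mul_le_of_le_one_left (abs_nonneg _) (hc i)).trans (hw i (Finset.ne_of_mem_erase hi))
    _ = (Fintype.card ι - 1 : ℝ) * t := by
        rw [Finset.sum_const, nsmul_eq_mul, Finset.cast_card_erase_of_mem (Finset.mem_univ _),
          Finset.card_univ]

variable [DecidableEq ι]

lemma volume_setOf_abs_mulVec_lt {G : Matrix ι ι ℝ} (hG : G.det ≠ 0) {b : ι → ℝ}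
    (hb : ∀ j, 0 < b j) :
    volume {x : ι → ℝ | ∀ j, |(G *ᵥ x) j| < b j} =
      ENNReal.ofReal (|G.det|⁻¹ * (2 ^ Fintype.card ι * ∏ j, b j)) := by
  have hbox : {x : ι → ℝ | ∀ j, |(G *ᵥ x) j| < b j} =
      Matrix.toLin' G ⁻¹' Set.pi Set.univ fun j => Set.Ioo (-b j) (b j) := by
    ext x; simp [abs_lt]
  have hprod : ∏ j, (b j - -b j) = 2 ^ Fintype.card ι * ∏ j, b j := by
    simp only [sub_neg_eq_add, ← two_mul, Finset.prod_mul_distrib, Finset.prod_const,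
      Finset.card_univ]
  have hdet : LinearMap.det (Matrix.toLin' G) = G.det := LinearMap.det_toLin' G
  rw [hbox, Measure.addHaar_preimage_linearMap _ (by rwa [hdet]), hdet, Real.volume_pi_Ioo,
    ← ENNReal.ofReal_prod_of_nonneg (fun j _ => by linarith [hb j]), hprod,
    ← ENNReal.ofReal_mul (abs_nonneg _), abs_inv]

theorem exists_int_abs_mulVec_lt {G : Matrix ι ι ℝ} (hG : G.det ≠ 0) {b : ι → ℝ}
    (hb : ∀ j, 0 < b j) (hlt : |G.det| < ∏ j, b j) :
    ∃ y : ι → ℤ, y ≠ 0 ∧ ∀ j, |(G *ᵥ fun i => (y i : ℝ)) j| < b j := by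
  set s : Set (ι → ℝ) := {x | ∀ j, |(G *ᵥ x) j| < b j} with hs
  set L := Submodule.span ℤ (Set.range (Pi.basisFun ℝ ι))
  have : Countable L.toAddSubgroup := inferInstanceAs (Countable L)
  have hfund : IsAddFundamentalDomain L.toAddSubgroup
      (ZSpan.fundamentalDomain (Pi.basisFun ℝ ι)) volume :=
    ZSpan.isAddFundamentalDomain (Pi.basisFun ℝ ι) volume
  have hsymm : ∀ x ∈ s, -x ∈ s := fun x hx j => by simpa [mulVec_neg] using hx j
  have hconv : Convex ℝ s := by
    simp only [hs, Set.ofPred_forall, abs_lt]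
    exact convex_iInter fun j => (convex_Ioo _ _).linear_preimage
      (LinearMap.proj j ∘ₗ Matrix.toLin' G)
  have hvol : volume (ZSpan.fundamentalDomain (Pi.basisFun ℝ ι)) *
      2 ^ Module.finrank ℝ (ι → ℝ) < volume s := by
    have hdet : 0 < |G.det| := abs_pos.2 hG
    have hprod := Finset.prod_pos fun j (_ : j ∈ Finset.univ) => hb j
    rw [ZSpan.fundamentalDomain_pi_basisFun, Real.volume_pi_Ico, volume_setOf_abs_mulVec_lt hG hb,
      Module.finrank_fintype_fun_eq_card, ENNReal.lt_ofReal_iff_toReal_lt (by simp)]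
    simp only [sub_zero, ENNReal.ofReal_one, Finset.prod_const_one, one_mul, ENNReal.toReal_pow,
      ENNReal.toReal_ofNat]
    rw [inv_mul_eq_div, lt_div_iff₀ hdet]
    gcongr
  obtain ⟨⟨x, hxL⟩, hx0, hx⟩ :=
    exists_ne_zero_mem_lattice_of_measure_mul_two_pow_lt_measure hfund hsymm hconv hvol
  obtain ⟨y, rfl⟩ := mem_span_int_range_basisFun_iff.1 hxL
  refine ⟨y, ?_, hx⟩
  rintro rfl
  exact hx0 (by ext; simp)

/-- The lattice `g ℤ^ι` has no nonzero vector of sup norm less than `s`. The Hecke neighbours of a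
lattice having this property are those for which bounded frames exist. -/
def NoShortVec (g : Matrix ι ι ℝ) (s : ℝ) : Prop :=
  ∀ y : ι → ℤ, y ≠ 0 → ∃ j, s ≤ |(g *ᵥ fun i => (y i : ℝ)) j|

lemma exists_int_abs_dotProduct_mulVec_lt {g : Matrix ι ι ℝ} (hg : g.det ≠ 0) {c : ι → ℝ} {i₀ : ι}
    (hi₀ : c i₀ = 1) {r t : ℝ} (hr : 0 < r) (ht : 0 < t)
    (hlt : |g.det| < r * t ^ (Fintype.card ι - 1)) :
    ∃ y : ι → ℤ, y ≠ 0 ∧ |c ⬝ᵥ (g *ᵥ fun i => (y i : ℝ))| < r ∧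
      ∀ j, j ≠ i₀ → |(g *ᵥ fun i => (y i : ℝ)) j| < t := by
  set G := g.updateRow i₀ (∑ k, c k • g k) with hG
  have hGdet : G.det = g.det := by rw [hG, det_updateRow_sum, hi₀, one_smul]
  have hprod : ∏ j, (if j = i₀ then r else t) = r * t ^ (Fintype.card ι - 1) := by
    simp [Finset.prod_ite, Finset.filter_eq', Finset.filter_ne']
  obtain ⟨y, hy0, hy⟩ := exists_int_abs_mulVec_lt (hGdet ▸ hg)
    (b := fun j => if j = i₀ then r else t) (fun j => by split_ifs <;> assumption)
    (by rwa [hGdet, hprod])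
  refine ⟨y, hy0, ?_, fun j hj => ?_⟩
  · have hrow : (∑ k, c k • g k) = c ᵥ* g := (vecMul_eq_sum c g).symm
    simpa [hG, mulVec, hrow, ← dotProduct_mulVec] using hy i₀
  · simpa [hG, mulVec, updateRow_ne hj, hj] using hy j

lemma NoShortVec.span_eq_top {g : Matrix ι ι ℝ} {r s t : ℝ} (hshort : NoShortVec g s)
    (hg : g.det ≠ 0) (hr : 0 < r) (ht : 0 < t) (hts : Fintype.card ι * t ≤ s)
    (hlt : |g.det| < r * t ^ (Fintype.card ι - 1)) :
    Submodule.span ℝ {w : ι → ℝ | (∃ y : ι → ℤ, w = g *ᵥ fun i => (y i : ℝ)) ∧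
      ∀ j, |w j| ≤ r + s} = ⊤ := by
  by_contra hne
  obtain ⟨c, i₀, hi₀, hc, hcX⟩ := exists_dotProduct_eq_zero_of_ne_top hne
  obtain ⟨y, hy0, hyr, hyt⟩ := exists_int_abs_dotProduct_mulVec_lt hg hi₀ hr ht hlt
  set w := g *ᵥ fun i => (y i : ℝ)
  have hcard : (1 : ℝ) ≤ Fintype.card ι := mod_cast Fintype.card_pos_iff.2 ⟨i₀⟩
  have hw := abs_le.1 (abs_dotProduct_sub_le hi₀ hc fun j hj => (hyt j hj).le)
  have hwC : ∀ j, |w j| ≤ r + s := by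
    intro j
    obtain rfl | hj := eq_or_ne j i₀
    · rw [abs_le]
      constructor <;> nlinarith [abs_lt.1 hyr]
    · nlinarith [hyt j hj]
  have hcw : c ⬝ᵥ w = 0 := hcX w (Submodule.subset_span ⟨⟨y, rfl⟩, hwC⟩)
  obtain ⟨j, hj⟩ := hshort y hy0
  refine hj.not_gt ?_
  obtain rfl | hj := eq_or_ne j i₀
  · rw [abs_lt]
    constructor <;> nlinarith
  · nlinarith [hyt j hj]

lemma exists_int_matrix_of_span_eq_top {g : Matrix ι ι ℝ} {P : (ι → ℝ) → Prop}
    (h : Submodule.span ℝ {w | (∃ y : ι → ℤ, w = g *ᵥ fun i => (y i : ℝ)) ∧ P w} = ⊤) :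
    ∃ V : Matrix ι ι ℤ, V.det ≠ 0 ∧ ∀ j, P ((g * V.map (Int.cast : ℤ → ℝ)).col j) := by
  obtain ⟨b, hbX, hbspan, hbli⟩ := exists_linearIndependent ℝ
    {w | (∃ y : ι → ℤ, w = g *ᵥ fun i => (y i : ℝ)) ∧ P w}
  let B : Module.Basis b ℝ (ι → ℝ) := Module.Basis.mk hbli (by
    rw [Subtype.range_coe, hbspan, h])
  let e := (Pi.basisFun ℝ ι).indexEquiv B
  choose y hy using fun j => (hbX (e j).2).1
  set V : Matrix ι ι ℤ := Matrix.of fun i j => y j i with hV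
  have hcol : (g * V.map (Int.cast : ℤ → ℝ)).col = fun j => (e j : ι → ℝ) := by
    ext j i
    rw [hy j]
    simp [hV, Matrix.mul_apply, mulVec, dotProduct]
  refine ⟨V, fun hV0 => ?_, fun j => ?_⟩
  · have hunit : IsUnit (g * V.map (Int.cast : ℤ → ℝ)) := by
      rw [← linearIndependent_cols_iff_isUnit, hcol]
      exact hbli.comp e e.injective
    rw [isUnit_iff_isUnit_det, det_mul, ← Int.cast_det, hV0, Int.cast_zero, mul_zero] at hunit
    exact not_isUnit_zero hunit
  · rw [hcol]
    exact (hbX (e j).2).2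

theorem NoShortVec.exists_int_matrix_abs_mul_le (ι : Type*) [Fintype ι] [DecidableEq ι] {s : ℝ}
    (hs : 0 < s) (D : ℝ) :
    ∃ C > 0, ∀ g : Matrix ι ι ℝ, g.det ≠ 0 → |g.det| ≤ D → NoShortVec g s →
      ∃ V : Matrix ι ι ℤ, V.det ≠ 0 ∧ ∀ i j, |(g * V.map (Int.cast : ℤ → ℝ)) i j| ≤ C := by
  set t : ℝ := s / (Fintype.card ι + 1) with ht
  have ht0 : 0 < t := by positivity
  have hts : Fintype.card ι * t ≤ s := by
    rw [ht, mul_div_assoc', div_le_iff₀ (by positivity)]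
    nlinarith
  set r : ℝ := (|D| + 1) / t ^ (Fintype.card ι - 1) with hr
  have hr0 : 0 < r := by positivity
  refine ⟨r + s, by positivity, fun g hg hgD hshort => ?_⟩
  have hlt : |g.det| < r * t ^ (Fintype.card ι - 1) := by
    rw [hr, div_mul_cancel₀ _ (by positivity)]
    linarith [le_abs_self D]
  obtain ⟨V, hV0, hV⟩ := exists_int_matrix_of_span_eq_top
    (hshort.span_eq_top hg hr0 ht0 hts hlt)
  exact ⟨V, hV0, fun i j => hV j i⟩

end Minkowski

section Hecke

variable {m p : ℕ}

/-- The columns of `heckeBasis p η` are a basis of the lattice of all `x ∈ ℤ^(m+1)` with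
`x_{j+1} ≡ η_j x_0` modulo `p`. These lattices have index `p^m` and, after rescaling, are Hecke
neighbours of `ℤ^(m+1)`. -/
def heckeBasis (p : ℕ) (η : Fin m → ZMod p) : Matrix (Fin (m + 1)) (Fin (m + 1)) ℤ :=
  Matrix.of (Fin.cons (Fin.cons 1 0) fun j => Fin.cons ((η j).val : ℤ) (Pi.single j (p : ℤ)))

/-- The integer matrix `p • (heckeBasis p η)⁻¹`, which clears the denominators of changes of basis
between Hecke neighbours. -/
def heckeCobasis (p : ℕ) (η : Fin m → ZMod p) : Matrix (Fin (m + 1)) (Fin (m + 1)) ℤ :=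
  Matrix.of (Fin.cons (Fin.cons (p : ℤ) 0)
    fun j => Fin.cons (-((η j).val : ℤ)) (Pi.single j 1))

lemma heckeBasis_mulVec_zero (η : Fin m → ZMod p) (x : Fin (m + 1) → ℤ) :
    (heckeBasis p η *ᵥ x) 0 = x 0 := by
  simp [heckeBasis, mulVec, dotProduct, Fin.sum_univ_succ]

lemma heckeBasis_mulVec_succ (η : Fin m → ZMod p) (x : Fin (m + 1) → ℤ) (j : Fin m) :
    (heckeBasis p η *ᵥ x) j.succ = (η j).val * x 0 + p * x j.succ := by
  simp [heckeBasis, mulVec, dotProduct, Fin.sum_univ_succ, Pi.single_apply]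

lemma heckeCobasis_mulVec_zero (η : Fin m → ZMod p) (x : Fin (m + 1) → ℤ) :
    (heckeCobasis p η *ᵥ x) 0 = p * x 0 := by
  simp [heckeCobasis, mulVec, dotProduct, Fin.sum_univ_succ]

lemma heckeCobasis_mulVec_succ (η : Fin m → ZMod p) (x : Fin (m + 1) → ℤ) (j : Fin m) :
    (heckeCobasis p η *ᵥ x) j.succ = -(η j).val * x 0 + x j.succ := by
  simp [heckeCobasis, mulVec, dotProduct, Fin.sum_univ_succ, Pi.single_apply]

lemma heckeCobasis_mul_heckeBasis (η : Fin m → ZMod p) :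
    heckeCobasis p η * heckeBasis p η = (p : ℤ) • (1 : Matrix _ _ ℤ) := by
  refine Matrix.ext_iff_mulVec.2 fun x => funext fun i => ?_
  rw [smul_mulVec, one_mulVec, ← mulVec_mulVec]
  cases i using Fin.cases with
  | zero => rw [heckeCobasis_mulVec_zero, heckeBasis_mulVec_zero]; rfl
  | succ j =>
    rw [heckeCobasis_mulVec_succ, heckeBasis_mulVec_zero, heckeBasis_mulVec_succ,
      Pi.smul_apply, smul_eq_mul]
    ring

lemma dvd_heckeBasis_mulVec (η : Fin m → ZMod p) {x : Fin (m + 1) → ℤ} (hx : (p : ℤ) ∣ x 0)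
    (i : Fin (m + 1)) : (p : ℤ) ∣ (heckeBasis p η *ᵥ x) i := by
  cases i using Fin.cases with
  | zero => rwa [heckeBasis_mulVec_zero]
  | succ j =>
    rw [heckeBasis_mulVec_succ]
    exact dvd_add (hx.mul_left _) (dvd_mul_right _ _)

lemma det_heckeBasis (η : Fin m → ZMod p) : (heckeBasis p η).det = (p : ℤ) ^ m := by
  have hlower : (heckeBasis p η).IsLowerTriangular := by
    intro i j hij
    obtain ⟨k, rfl⟩ := Fin.exists_succ_eq.2 (Fin.ne_zero_of_lt hij)
    cases i using Fin.cases with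
    | zero => simp [heckeBasis]
    | succ i => simp [heckeBasis, (Fin.succ_lt_succ_iff.1 hij).ne']
  rw [det_of_isLowerTriangular _ hlower, Fin.prod_univ_succ]
  simp [heckeBasis]

/-- The first row of `V` modulo `p`. In the coordinates given by the frame
`heckeBasis p η * V`, the vectors of `p ℤ^(m+1)` are the integer vectors orthogonal to it modulo
`p`. -/
def frameRow (p : ℕ) (V : Matrix (Fin (m + 1)) (Fin (m + 1)) ℤ) : Fin (m + 1) → ZMod p :=
  fun i => (V 0 i : ZMod p)

lemma eq_of_heckeBasis_mul_eq [Fact p.Prime] {η η' : Fin m → ZMod p}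
    {V V' : Matrix (Fin (m + 1)) (Fin (m + 1)) ℤ} (hV : frameRow p V ≠ 0)
    (h : heckeBasis p η * V = heckeBasis p η' * V') : η = η' ∧ V = V' := by
  have hp : (p : ℤ) ≠ 0 := Nat.cast_ne_zero.2 (Fact.out : p.Prime).ne_zero
  have hcol : ∀ i, heckeBasis p η *ᵥ V.col i = heckeBasis p η' *ᵥ V'.col i :=
    fun i => funext fun k => congrFun (congrFun h k) i
  have hη : η = η' := by
    obtain ⟨i, hi⟩ := Function.ne_iff.1 hV
    have hzero : V.col i 0 = V'.col i 0 := by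
      rw [← heckeBasis_mulVec_zero η (V.col i), hcol, heckeBasis_mulVec_zero]
    funext j
    have hsucc := congrArg (Int.cast : ℤ → ZMod p) (congrFun (hcol i) j.succ)
    rw [heckeBasis_mulVec_succ, heckeBasis_mulVec_succ, ← hzero] at hsucc
    push_cast at hsucc
    simpa [show (V 0 i : ZMod p) ≠ 0 from hi] using hsucc
  subst hη
  refine ⟨rfl, ?_⟩
  have hdet : (heckeBasis p η).det ≠ 0 := det_heckeBasis η ▸ pow_ne_zero m hp
  ext k i
  have hzero : heckeBasis p η *ᵥ (V.col i - V'.col i) = 0 := by rw [mulVec_sub, hcol, sub_self]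
  exact sub_eq_zero.1 (congrFun (eq_zero_of_mulVec_eq_zero hdet hzero) k)

lemma heckeBasis_mulVec_zero_ne_zero (η : Fin m → ZMod p) {y : Fin (m + 1) → ℤ} (hy : y ≠ 0)
    {b : ℤ} (hbp : b < p) (hyb : ∀ i, |(heckeBasis p η *ᵥ y) i| ≤ b) : y 0 ≠ 0 := by
  refine fun h0 => hy (funext fun i => ?_)
  cases i using Fin.cases with
  | zero => exact h0
  | succ j =>
    have hj := hyb j.succ
    rw [heckeBasis_mulVec_succ, h0, mul_zero, zero_add] at hj
    exact (mul_eq_zero.1 (Int.eq_zero_of_abs_lt_dvd (dvd_mul_right _ _)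
      (hj.trans_lt hbp))).resolve_left (by have := (abs_nonneg _).trans hj; omega)

open Finset Classical in
lemma card_exists_abs_heckeBasis_mulVec_le [Fact p.Prime] {b : ℕ} (hb : b < p) :
    #{η : Fin m → ZMod p | ∃ y ≠ 0, ∀ i, |(heckeBasis p η *ᵥ y) i| ≤ b} ≤ (3 * b) ^ (m + 1) := by
  set I := Icc (-(b : ℤ)) b with hI
  set f : ℤ × (Fin m → ℤ) → Fin m → ZMod p := fun q j => (q.2 j : ZMod p) / (q.1 : ZMod p)
  have hsub : ({η | ∃ y ≠ 0, ∀ i, |(heckeBasis p η *ᵥ y) i| ≤ b} : Finset (Fin m → ZMod p)) ⊆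
      (I.erase 0 ×ˢ Fintype.piFinset fun _ : Fin m => I).image f := by
    intro η hη
    obtain ⟨y, hy0, hy⟩ := (mem_filter.1 hη).2
    have hy00 := heckeBasis_mulVec_zero_ne_zero η hy0 (Nat.cast_lt.2 hb) hy
    have hmem : ∀ i, (heckeBasis p η *ᵥ y) i ∈ I := fun i => mem_Icc.2 (abs_le.1 (hy i))
    have hyzero : |y 0| ≤ b := by simpa only [heckeBasis_mulVec_zero] using hy 0
    have hyp : (y 0 : ZMod p) ≠ 0 := fun h => hy00 <| Int.eq_zero_of_abs_lt_dvd
      ((ZMod.intCast_zmod_eq_zero_iff_dvd _ _).1 h) (hyzero.trans_lt (Nat.cast_lt.2 hb))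
    refine mem_image.2 ⟨(y 0, fun j => (heckeBasis p η *ᵥ y) j.succ), ?_, funext fun j => ?_⟩
    · rw [mem_product, mem_erase, Fintype.mem_piFinset]
      exact ⟨⟨hy00, heckeBasis_mulVec_zero η y ▸ hmem 0⟩, fun j => hmem j.succ⟩
    · simp [f, heckeBasis_mulVec_succ, hyp]
  have hcardI : #I = 2 * b + 1 := by rw [hI, Int.card_Icc]; omega
  have h0 : (0 : ℤ) ∈ I := by rw [hI, mem_Icc]; omega
  calc _ ≤ #(I.erase 0 ×ˢ Fintype.piFinset fun _ : Fin m => I) :=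
        (card_le_card hsub).trans card_image_le
    _ = 2 * b * (2 * b + 1) ^ m := by
        rw [card_product, Fintype.card_piFinset_const, card_erase_of_mem h0, hcardI,
          Nat.add_sub_cancel]
    _ ≤ (3 * b) ^ (m + 1) := by
        obtain rfl | hb0 := b.eq_zero_or_pos
        · simp
        · rw [pow_succ']
          gcongr <;> omega

/-- A basis of the Hecke neighbour of `ℤ^(m+1)` given by `η`, rescaled by `N / p` so as to have
covolume close to `1` when `p` is close to `N^(m+1)`, multiplied by the coordinate matrix `V` of a
frame. -/
noncomputable def heckeFrame (N : ℕ) (η : Fin m → ZMod p)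
    (V : Matrix (Fin (m + 1)) (Fin (m + 1)) ℤ) : Matrix (Fin (m + 1)) (Fin (m + 1)) ℝ :=
  ((N : ℝ) / p) • (heckeBasis p η * V).map (Int.cast : ℤ → ℝ)

lemma heckeFrame_mulVec (N : ℕ) (η : Fin m → ZMod p) (V : Matrix (Fin (m + 1)) (Fin (m + 1)) ℤ)
    (y : Fin (m + 1) → ℤ) (i : Fin (m + 1)) :
    (heckeFrame N η V *ᵥ fun k => (y k : ℝ)) i =
      N / p * ((heckeBasis p η *ᵥ (V *ᵥ y)) i : ℤ) := by
  rw [heckeFrame, smul_mulVec, Pi.smul_apply, smul_eq_mul, mulVec_mulVec]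
  simp [mulVec, dotProduct]

lemma heckeFrame_one_mul (N : ℕ) (η : Fin m → ZMod p)
    (V : Matrix (Fin (m + 1)) (Fin (m + 1)) ℤ) :
    heckeFrame N η 1 * V.map (Int.cast : ℤ → ℝ) = heckeFrame N η V := by
  rw [heckeFrame, heckeFrame, Matrix.mul_one, Matrix.smul_mul, ← Matrix.map_mul_intCast]

lemma det_heckeFrame [Fact p.Prime] (N : ℕ) (η : Fin m → ZMod p)
    (V : Matrix (Fin (m + 1)) (Fin (m + 1)) ℤ) :
    (heckeFrame N η V).det = N ^ (m + 1) / p * V.det := by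
  have hp : (p : ℝ) ≠ 0 := Nat.cast_ne_zero.2 (Fact.out : p.Prime).ne_zero
  rw [heckeFrame, det_smul, ← Int.cast_det, det_mul, det_heckeBasis, Fintype.card_fin]
  push_cast
  rw [div_pow, pow_succ (p : ℝ)]
  field_simp

open Classical in
lemma two_mul_card_not_noShortVec_le [Fact p.Prime] {N : ℕ} (hN : N ≠ 0)
    (hp : p ≤ 2 * N ^ (m + 1)) :
    2 * Finset.card {η : Fin m → ZMod p | ¬ NoShortVec (heckeFrame N η 1) (1 / 12)} ≤ p ^ m := by
  have hppos : 0 < p := (Fact.out : p.Prime).pos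
  have hNpos : 0 < N := Nat.pos_of_ne_zero hN
  set b := p / (12 * N)
  have hbp : 12 * b * N ≤ p := (by ring : 12 * b * N = b * (12 * N)) ▸ Nat.div_mul_le_self _ _
  have hsub : ({η | ¬ NoShortVec (heckeFrame N η 1) (1 / 12)} : Finset (Fin m → ZMod p)) ⊆
      ({η | ∃ y ≠ 0, ∀ i, |(heckeBasis p η *ᵥ y) i| ≤ b} : Finset (Fin m → ZMod p)) := by
    intro η hη
    simp only [NoShortVec, Finset.mem_filter_univ, not_forall, not_exists, not_le] at hη ⊢
    obtain ⟨y, hy0, hy⟩ := hη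
    refine ⟨y, hy0, fun i => ?_⟩
    have hyi := hy i
    rw [heckeFrame_mulVec, one_mulVec, abs_mul, abs_of_pos (by positivity), div_mul_eq_mul_div,
      div_lt_div_iff₀ (by positivity) (by positivity)] at hyi
    norm_cast at hyi
    rw [Int.natCast_div, Int.le_ediv_iff_mul_le (by positivity)]
    push_cast at hyi ⊢
    linarith
  have hcard := (Finset.card_le_card hsub).trans
    (card_exists_abs_heckeBasis_mulVec_le (Nat.div_lt_self hppos (by omega : 1 < 12 * N)))
  have h12 : (12 * b) ^ (m + 1) ≤ 2 * p ^ m := by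
    refine Nat.le_of_mul_le_mul_right ?_ (pow_pos hNpos (m + 1))
    calc (12 * b) ^ (m + 1) * N ^ (m + 1) ≤ p ^ (m + 1) := by
          rw [← mul_pow]; exact Nat.pow_le_pow_left hbp _
      _ ≤ p ^ m * (2 * N ^ (m + 1)) := by rw [pow_succ]; gcongr
      _ = 2 * p ^ m * N ^ (m + 1) := by ring
  have h4 : 4 * (3 * b) ^ (m + 1) ≤ (12 * b) ^ (m + 1) := by
    rw [(by ring : 12 * b = 4 * (3 * b)), mul_pow 4]
    gcongr
    exact le_self_pow₀ (by norm_num) m.succ_ne_zero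
  linarith

open Classical in
lemma pow_le_two_mul_card_noShortVec [Fact p.Prime] {N : ℕ} (hN : N ≠ 0)
    (hp : p ≤ 2 * N ^ (m + 1)) :
    p ^ m ≤ 2 * Finset.card {η : Fin m → ZMod p | NoShortVec (heckeFrame N η 1) (1 / 12)} := by
  have hcompl := Finset.card_filter_add_card_filter_not (s := Finset.univ)
    fun η : Fin m → ZMod p => NoShortVec (heckeFrame N η 1) (1 / 12)
  rw [Finset.card_univ, Fintype.card_fun, ZMod.card, Fintype.card_fin] at hcompl
  linarith [two_mul_card_not_noShortVec_le hN hp]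

end Hecke

section MatrixBounds

variable {ι : Type*} [Fintype ι]

lemma abs_mulVec_le {a b : ℝ} {A : Matrix ι ι ℝ} {v : ι → ℝ} (ha : ∀ i j, |A i j| ≤ a)
    (hb : ∀ j, |v j| ≤ b) (i : ι) : |(A *ᵥ v) i| ≤ Fintype.card ι * (a * b) := by
  calc |∑ k, A i k * v k| ≤ ∑ k, |A i k * v k| := Finset.abs_sum_le_sum_abs _ _
    _ ≤ ∑ _k : ι, a * b := Finset.sum_le_sum fun k _ => by
        rw [abs_mul]
        exact mul_le_mul (ha i k) (hb k) (abs_nonneg _) ((abs_nonneg _).trans (ha i k))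
    _ = Fintype.card ι * (a * b) := by simp

variable [DecidableEq ι]

lemma abs_det_le {R : ℝ} {h : Matrix ι ι ℝ} (hh : ∀ i j, |h i j| ≤ R) :
    |h.det| ≤ (Fintype.card ι).factorial * R ^ Fintype.card ι := by
  simpa using det_le (abv := IsAbsoluteValue.toAbsoluteValue (abs : ℝ → ℝ)) hh

/-- The matrices with entries at most `R` and determinant at least `R⁻¹` in absolute value. They
form compact sets which exhaust the invertible matrices as `R` tends to infinity. -/
def InBox (R : ℝ) (h : Matrix ι ι ℝ) : Prop :=
  (∀ i j, |h i j| ≤ R) ∧ R⁻¹ ≤ |h.det|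

lemma InBox.det_ne_zero {R : ℝ} (hR : 0 < R) {h : Matrix ι ι ℝ} (hh : InBox R h) : h.det ≠ 0 :=
  abs_pos.1 ((inv_pos.2 hR).trans_le hh.2)

lemma InBox.abs_inv_le {R : ℝ} (hR : 1 ≤ R) {h : Matrix ι ι ℝ} (hh : InBox R h) (i j : ι) :
    |h⁻¹ i j| ≤ (Fintype.card ι).factorial * R ^ (Fintype.card ι + 1) := by
  have hadj : |h.adjugate i j| ≤ (Fintype.card ι).factorial * R ^ Fintype.card ι := by
    rw [adjugate_apply]
    refine abs_det_le fun k l => ?_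
    obtain rfl | hk := eq_or_ne k j
    · rw [updateRow_self, Pi.single_apply]
      split_ifs <;> simp <;> linarith
    · rw [updateRow_ne hk]
      exact hh.1 k l
  have hdet : |h.det|⁻¹ ≤ R := inv_le_of_inv_le₀ (by linarith) hh.2
  rw [Matrix.inv_def, Matrix.smul_apply, smul_eq_mul, abs_mul, Ring.inverse_eq_inv', abs_inv]
  calc |h.det|⁻¹ * |h.adjugate i j| ≤ R * ((Fintype.card ι).factorial * R ^ Fintype.card ι) :=
        mul_le_mul hdet hadj (abs_nonneg _) (by linarith)
    _ = (Fintype.card ι).factorial * R ^ (Fintype.card ι + 1) := by ring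

lemma NoShortVec.mul {h F : Matrix ι ι ℝ} {ρ s : ℝ} (hF : NoShortVec F s) (hh : h.det ≠ 0)
    (hρ : 0 < ρ) (hinv : ∀ i j, |h⁻¹ i j| ≤ ρ) :
    NoShortVec (h * F) (s / (Fintype.card ι * ρ)) := by
  intro y hy
  obtain ⟨i, hi⟩ := hF y hy
  set v := (h * F) *ᵥ fun i => (y i : ℝ)
  have : Nonempty ι := ⟨i⟩
  obtain ⟨j, hj⟩ := Finite.exists_max fun j => |v j|
  have hv : h⁻¹ *ᵥ v = F *ᵥ fun i => (y i : ℝ) := by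
    rw [mulVec_mulVec, ← Matrix.mul_assoc, nonsing_inv_mul _ hh.isUnit, Matrix.one_mul]
  refine ⟨j, (div_le_iff₀ (by positivity)).2 ?_⟩
  calc s ≤ |(h⁻¹ *ᵥ v) i| := hv ▸ hi
    _ ≤ Fintype.card ι * (ρ * |v j|) := abs_mulVec_le hinv hj i
    _ = |v j| * (Fintype.card ι * ρ) := by ring

/-- The nonsingular integer matrices whose determinant is bounded by `D`, viewed as the coordinate
matrices of linearly independent vectors spanning a sublattice of index at most `D`. -/
abbrev IntFrame (ι : Type*) [Fintype ι] [DecidableEq ι] (D : ℕ) :=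
  {V : Matrix ι ι ℤ // V.det ≠ 0 ∧ |V.det| ≤ D}

theorem NoShortVec.exists_inBox_mul (ι : Type*) [Fintype ι] [DecidableEq ι] {s : ℝ} (hs : 0 < s)
    {R : ℝ} (hR : 0 < R) :
    ∃ (R' : ℝ) (D : ℕ), 1 ≤ R' ∧ ∀ g : Matrix ι ι ℝ, R⁻¹ ≤ |g.det| → |g.det| ≤ R →
      NoShortVec g s → ∃ V : IntFrame ι D, InBox R' (g * V.1.map (Int.cast : ℤ → ℝ)) := by
  obtain ⟨C, hC, hCV⟩ := NoShortVec.exists_int_matrix_abs_mul_le ι hs R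
  set M : ℝ := (Fintype.card ι).factorial * C ^ Fintype.card ι
  refine ⟨max (max C R) 1, ⌈R * M⌉₊, le_max_right _ _, fun g hg₁ hg₂ hshort => ?_⟩
  have hgdet : 0 < |g.det| := (inv_pos.2 hR).trans_le hg₁
  obtain ⟨V, hV0, hV⟩ := hCV g (abs_pos.1 hgdet) hg₂ hshort
  have hdet : |(g * V.map (Int.cast : ℤ → ℝ)).det| = |g.det| * |(V.det : ℝ)| := by
    rw [det_mul, abs_mul, Int.cast_det]
  have hVM : |(V.det : ℝ)| ≤ R * M := by
    calc |(V.det : ℝ)| = |g.det|⁻¹ * (|g.det| * |(V.det : ℝ)|) :=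
          (inv_mul_cancel_left₀ hgdet.ne' _).symm
      _ ≤ R * M := mul_le_mul (inv_le_of_inv_le₀ hR hg₁) (hdet ▸ abs_det_le hV)
          (by positivity) hR.le
  have hV1 : (1 : ℝ) ≤ |(V.det : ℝ)| := mod_cast Int.one_le_abs hV0
  refine ⟨⟨V, hV0, mod_cast hVM.trans (Nat.le_ceil _)⟩,
    fun i j => (hV i j).trans ((le_max_left _ _).trans (le_max_left _ _)), ?_⟩
  calc (max (max C R) 1)⁻¹ ≤ R⁻¹ := inv_anti₀ hR ((le_max_right _ _).trans (le_max_left _ _))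
    _ ≤ |g.det| * |(V.det : ℝ)| := hg₁.trans (le_mul_of_one_le_right (abs_nonneg _) hV1)
    _ = |(g * V.map (Int.cast : ℤ → ℝ)).det| := hdet.symm

theorem exists_inBox_mul_heckeFrame (m : ℕ) {R : ℝ} (hR : 1 ≤ R) :
    ∃ (R' : ℝ) (D : ℕ), 1 ≤ R' ∧ ∀ h : Matrix (Fin (m + 1)) (Fin (m + 1)) ℝ, InBox R h →
      ∀ N p : ℕ, [Fact p.Prime] → N ^ (m + 1) ≤ p → p ≤ 2 * N ^ (m + 1) →
      ∀ η : Fin m → ZMod p, NoShortVec (heckeFrame N η 1) (1 / 12) →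
      ∃ V : IntFrame (Fin (m + 1)) D, InBox R' (h * heckeFrame N η V.1) := by
  set n := Fintype.card (Fin (m + 1))
  have hn : 0 < n := Fintype.card_pos
  set ρ : ℝ := n.factorial * R ^ (n + 1)
  have hR0 : 0 < R := by linarith
  have hρ0 : 0 < ρ := by positivity
  set R₁ : ℝ := 2 * R + n.factorial * R ^ n
  obtain ⟨R', D, hR', hD⟩ := NoShortVec.exists_inBox_mul (Fin (m + 1))
    (s := 1 / 12 / (n * ρ)) (by positivity) (R := R₁) (by positivity)
  refine ⟨R', D, hR', fun h hh N p _ hNp hpN η hη => ?_⟩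
  have hp0 : (0 : ℝ) < p := Nat.cast_pos.2 (Fact.out : p.Prime).pos
  set q : ℝ := (N : ℝ) ^ (m + 1) / p with hq
  have hq1 : q ≤ 1 := div_le_one_of_le₀ (mod_cast hNp) hp0.le
  have hq2 : 2⁻¹ ≤ q := by
    rw [hq, le_div_iff₀ hp0, inv_mul_le_iff₀ two_pos]
    exact_mod_cast hpN
  have hdet : |(h * heckeFrame N η 1).det| = q * |h.det| := by
    rw [det_mul, det_heckeFrame, det_one, Int.cast_one, mul_one, mul_comm, abs_mul,
      abs_of_nonneg (by positivity)]
  obtain ⟨V, hV⟩ := hD (h * heckeFrame N η 1)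
    (by
      calc R₁⁻¹ ≤ (2 * R)⁻¹ := inv_anti₀ (by positivity) (le_add_of_nonneg_right (by positivity))
        _ = 2⁻¹ * R⁻¹ := mul_inv _ _
        _ ≤ q * |h.det| := mul_le_mul hq2 hh.2 (by positivity) (by positivity)
        _ = |(h * heckeFrame N η 1).det| := hdet.symm)
    (by
      calc |(h * heckeFrame N η 1).det| ≤ |h.det| :=
            hdet ▸ mul_le_of_le_one_left (abs_nonneg _) hq1
        _ ≤ n.factorial * R ^ n := abs_det_le hh.1
        _ ≤ R₁ := le_add_of_nonneg_left (by positivity))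
    (hη.mul (hh.det_ne_zero hR0) hρ0 (hh.abs_inv_le hR))
  exact ⟨V, by rwa [← heckeFrame_one_mul, ← Matrix.mul_assoc]⟩

end MatrixBounds

section Count

variable {m p : ℕ}

lemma frameRow_ne_zero {D : ℕ} (hDp : D < p) (V : IntFrame (Fin (m + 1)) D) :
    frameRow p V.1 ≠ 0 := by
  intro hrow
  have hdet : ((V.1.det : ℤ) : ZMod p) = 0 := by
    rw [Int.cast_det]
    exact det_eq_zero_of_row_eq_zero 0 (congrFun hrow)
  exact V.2.1 (Int.eq_zero_of_abs_lt_dvd ((ZMod.intCast_zmod_eq_zero_iff_dvd _ _).1 hdet)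
    (V.2.2.trans_lt (Nat.cast_lt.2 hDp)))

lemma det_heckeFrame_ne_zero [Fact p.Prime] {N : ℕ} (hN : N ≠ 0) (η : Fin m → ZMod p)
    {V : Matrix (Fin (m + 1)) (Fin (m + 1)) ℤ} (hV : V.det ≠ 0) :
    (heckeFrame N η V).det ≠ 0 := by
  have hp : (p : ℝ) ≠ 0 := Nat.cast_ne_zero.2 (Fact.out : p.Prime).ne_zero
  have hN' : (N : ℝ) ≠ 0 := Nat.cast_ne_zero.2 hN
  have hV' : (V.det : ℝ) ≠ 0 := Int.cast_ne_zero.2 hV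
  rw [det_heckeFrame]
  positivity

lemma dvd_mul_adjugate_mul_heckeCobasis_apply_zero (η : Fin m → ZMod p)
    {V₀ V : Matrix (Fin (m + 1)) (Fin (m + 1)) ℤ} {c : ZMod p}
    (hrow : frameRow p V₀ = c • frameRow p V) (j : Fin (m + 1)) :
    (p : ℤ) ∣ (V₀ * (V.adjugate * heckeCobasis p η)) 0 j := by
  have hV : V * (V.adjugate * heckeCobasis p η) = V.det • heckeCobasis p η := by
    rw [← Matrix.mul_assoc, mul_adjugate, Matrix.smul_mul, Matrix.one_mul]
  have hzero : ((V * (V.adjugate * heckeCobasis p η)) 0 j : ZMod p) = 0 := by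
    rw [hV]
    cases j using Fin.cases <;> simp [heckeCobasis]
  have hentry : ∀ k, (V₀ 0 k : ZMod p) = c * (V 0 k : ZMod p) := congrFun hrow
  rw [← ZMod.intCast_zmod_eq_zero_iff_dvd]
  rw [Matrix.mul_apply] at hzero ⊢
  push_cast at hzero ⊢
  simp only [hentry, mul_assoc]
  rw [← Finset.mul_sum, hzero, mul_zero]

lemma exists_det_smul_heckeBasis_mul_eq [Fact p.Prime] (η₀ η : Fin m → ZMod p)
    {V₀ V : Matrix (Fin (m + 1)) (Fin (m + 1)) ℤ} {c : ZMod p}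
    (hrow : frameRow p V₀ = c • frameRow p V) :
    ∃ X : Matrix (Fin (m + 1)) (Fin (m + 1)) ℤ,
      V.det • (heckeBasis p η₀ * V₀) = X * (heckeBasis p η * V) := by
  have hp : (p : ℤ) ≠ 0 := Nat.cast_ne_zero.2 (Fact.out : p.Prime).ne_zero
  set Y := V₀ * (V.adjugate * heckeCobasis p η) with hY
  choose X hX using fun i j => dvd_heckeBasis_mulVec η₀ (x := Y.col j)
    (dvd_mul_adjugate_mul_heckeCobasis_apply_zero η hrow j) i
  have hXY : heckeBasis p η₀ * Y = (p : ℤ) • Matrix.of X := by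
    ext i j
    exact hX i j
  have hYV : Y * (heckeBasis p η * V) = (p : ℤ) • V.det • V₀ := by
    calc Y * (heckeBasis p η * V)
        = V₀ * (V.adjugate * ((heckeCobasis p η * heckeBasis p η) * V)) := by
          simp only [hY, Matrix.mul_assoc]
      _ = (p : ℤ) • V.det • V₀ := by
          simp only [heckeCobasis_mul_heckeBasis, Matrix.smul_mul, Matrix.one_mul, Matrix.mul_smul,
            adjugate_mul, Matrix.mul_one]
  refine ⟨Matrix.of X, smul_right_injective _ hp ?_⟩
  calc (p : ℤ) • V.det • (heckeBasis p η₀ * V₀) = heckeBasis p η₀ * Y * (heckeBasis p η * V) := by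
        rw [Matrix.mul_assoc, hYV, Matrix.mul_smul, Matrix.mul_smul]
    _ = (p : ℤ) • (Matrix.of X * (heckeBasis p η * V)) := by rw [hXY, Matrix.smul_mul]

lemma abs_mul_inv_apply_le {ι : Type*} [Fintype ι] [DecidableEq ι] {R : ℝ} (hR : 1 ≤ R)
    {g F₀ F : Matrix ι ι ℝ} (hF₀ : F₀.det ≠ 0) (hg₀ : InBox R (g * F₀⁻¹)) (hg : InBox R (g * F⁻¹))
    (i j : ι) : |(F₀ * F⁻¹) i j| ≤
      Fintype.card ι * ((Fintype.card ι).factorial * R ^ (Fintype.card ι + 1) * R) := by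
  have hgdet : g.det ≠ 0 := left_ne_zero_of_mul (det_mul g _ ▸ hg₀.det_ne_zero (by linarith))
  have hmul : F₀ * F⁻¹ = (g * F₀⁻¹)⁻¹ * (g * F⁻¹) := by
    rw [Matrix.mul_inv_rev, nonsing_inv_nonsing_inv _ hF₀.isUnit, Matrix.mul_assoc,
      ← Matrix.mul_assoc g⁻¹, nonsing_inv_mul _ hgdet.isUnit, Matrix.one_mul]
  rw [hmul]
  exact abs_mulVec_le (hg₀.abs_inv_le hR) (v := (g * F⁻¹).col j) (fun k => hg.1 k j) i

lemma exists_abs_le_of_det_smul_heckeBasis_mul_eq (m D : ℕ) {R : ℝ} (hR : 1 ≤ R) :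
    ∃ L : ℤ, ∀ (N p : ℕ) [Fact p.Prime], N ≠ 0 → ∀ (g : Matrix (Fin (m + 1)) (Fin (m + 1)) ℝ)
      (η₀ η : Fin m → ZMod p) (V₀ V : IntFrame (Fin (m + 1)) D)
      (X : Matrix (Fin (m + 1)) (Fin (m + 1)) ℤ),
      InBox R (g * (heckeFrame N η₀ V₀.1)⁻¹) → InBox R (g * (heckeFrame N η V.1)⁻¹) →
      V.1.det • (heckeBasis p η₀ * V₀.1) = X * (heckeBasis p η * V.1) → ∀ i j, |X i j| ≤ L := by
  set B : ℝ := Fintype.card (Fin (m + 1)) *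
    ((Fintype.card (Fin (m + 1))).factorial * R ^ (Fintype.card (Fin (m + 1)) + 1) * R)
  refine ⟨⌈D * B⌉, fun N p _ hN g η₀ η V₀ V X hg₀ hg hX i j => ?_⟩
  have hF₀ := det_heckeFrame_ne_zero hN η₀ V₀.2.1
  have hF := det_heckeFrame_ne_zero hN η V.2.1
  have hframe : (V.1.det : ℝ) • heckeFrame N η₀ V₀.1 =
      X.map (Int.cast : ℤ → ℝ) * heckeFrame N η V.1 := by
    rw [heckeFrame, heckeFrame, Matrix.mul_smul, ← Matrix.map_mul_intCast, ← hX, smul_comm]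
    congr 1
    ext k l
    simp only [map_apply, Matrix.smul_apply, smul_eq_mul, Int.cast_mul]
  have hXF : X.map (Int.cast : ℤ → ℝ) =
      (V.1.det : ℝ) • (heckeFrame N η₀ V₀.1 * (heckeFrame N η V.1)⁻¹) := by
    rw [← Matrix.smul_mul, hframe, Matrix.mul_assoc, mul_nonsing_inv _ hF.isUnit, Matrix.mul_one]
  have hXij : (X i j : ℝ) =
      V.1.det * (heckeFrame N η₀ V₀.1 * (heckeFrame N η V.1)⁻¹) i j := congrFun (congrFun hXF i) j
  have hD : |(V.1.det : ℝ)| ≤ D := mod_cast V.2.2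
  have hbound : |(X i j : ℝ)| ≤ D * B := by
    rw [hXij, abs_mul]
    exact mul_le_mul hD (abs_mul_inv_apply_le hR hF₀ hg₀ hg i j) (abs_nonneg _) (Nat.cast_nonneg D)
  exact_mod_cast hbound.trans (Int.le_ceil _)

lemma eq_of_det_smul_heckeBasis_mul_eq [Fact p.Prime] {D : ℕ} (hDp : D < p)
    {η₀ η η' : Fin m → ZMod p} {V₀ V V' : IntFrame (Fin (m + 1)) D}
    {X : Matrix (Fin (m + 1)) (Fin (m + 1)) ℤ} (hdet : V.1.det = V'.1.det)
    (hX : V.1.det • (heckeBasis p η₀ * V₀.1) = X * (heckeBasis p η * V.1))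
    (hX' : V'.1.det • (heckeBasis p η₀ * V₀.1) = X * (heckeBasis p η' * V'.1)) :
    η = η' ∧ V = V' := by
  have hp : (p : ℤ) ≠ 0 := Nat.cast_ne_zero.2 (Fact.out : p.Prime).ne_zero
  have hXdet : X.det ≠ 0 := by
    refine left_ne_zero_of_mul (b := (heckeBasis p η * V.1).det) ?_
    rw [← det_mul, ← hX, det_smul, det_mul, det_heckeBasis]
    exact mul_ne_zero (pow_ne_zero _ V.2.1) (mul_ne_zero (pow_ne_zero _ hp) V₀.2.1)
  have hcancel : ∀ A : Matrix (Fin (m + 1)) (Fin (m + 1)) ℤ,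
      X.adjugate * (X * A) = X.det • A := fun A => by
    rw [← Matrix.mul_assoc, adjugate_mul, Matrix.smul_mul, Matrix.one_mul]
  have heq : heckeBasis p η * V.1 = heckeBasis p η' * V'.1 := by
    refine smul_right_injective _ hXdet ?_
    change X.det • (heckeBasis p η * V.1) = X.det • (heckeBasis p η' * V'.1)
    rw [← hcancel, ← hcancel, ← hX, ← hX', hdet]
  obtain ⟨hη, hV⟩ := eq_of_heckeBasis_mul_eq (frameRow_ne_zero hDp V) heq
  exact ⟨hη, Subtype.ext hV⟩

open Finset in
theorem exists_card_collinear_le (m D : ℕ) {R : ℝ} (hR : 1 ≤ R) :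
    ∃ C : ℕ, ∀ (N p : ℕ) [Fact p.Prime], N ≠ 0 → D < p →
      ∀ (g : Matrix (Fin (m + 1)) (Fin (m + 1)) ℝ) (ξ : Fin (m + 1) → ZMod p)
        (T : Finset ((Fin m → ZMod p) × IntFrame (Fin (m + 1)) D)),
      (∀ τ ∈ T, InBox R (g * (heckeFrame N τ.1 τ.2.1)⁻¹) ∧
        ∃ c : ZMod p, c ≠ 0 ∧ ξ = c • frameRow p τ.2.1) → #T ≤ C := by
  obtain ⟨L, hL⟩ := exists_abs_le_of_det_smul_heckeBasis_mul_eq m D hR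
  refine ⟨#(Icc (-D : ℤ) D ×ˢ Icc (fun _ _ => -L : Fin (m + 1) → Fin (m + 1) → ℤ)
    fun _ _ => L), fun N p _ hN hDp g ξ T hT => ?_⟩
  obtain rfl | ⟨⟨η₀, V₀⟩, h₀⟩ := T.eq_empty_or_nonempty
  · simp
  obtain ⟨hbox₀, c₀, hc₀, hξ₀⟩ := hT _ h₀
  have hX : ∀ τ ∈ T, ∃ X : Matrix (Fin (m + 1)) (Fin (m + 1)) ℤ,
      τ.2.1.det • (heckeBasis p η₀ * V₀.1) = X * (heckeBasis p τ.1 * τ.2.1) := by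
    intro τ hτ
    obtain ⟨-, c, hc, hξ⟩ := hT τ hτ
    refine exists_det_smul_heckeBasis_mul_eq η₀ τ.1 (c := c₀⁻¹ * c) ?_
    rw [mul_smul, ← hξ, hξ₀, smul_smul, inv_mul_cancel₀ hc₀, one_smul]
  choose! X hX using hX
  refine card_le_card_of_injOn (fun τ => (τ.2.1.det, X τ)) (fun τ hτ => ?_)
    fun τ hτ τ' hτ' heq => ?_
  · have hXL := hL N p hN g η₀ τ.1 V₀ τ.2 (X τ) hbox₀ (hT τ hτ).1 (hX τ hτ)
    exact mem_product.2 ⟨mem_Icc.2 (abs_le.1 τ.2.2.2), mem_Icc.2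
      ⟨fun i j => (abs_le.1 (hXL i j)).1, fun i j => (abs_le.1 (hXL i j)).2⟩⟩
  · obtain ⟨hdet, hXX⟩ := Prod.ext_iff.1 heq
    obtain ⟨hη, hV⟩ := eq_of_det_smul_heckeBasis_mul_eq hDp hdet (hX τ hτ)
      ((show X τ = X τ' from hXX) ▸ hX τ' hτ')
    exact Prod.ext hη hV

end Count

section Avoidance

variable {ι : Type*} [Fintype ι] {m p : ℕ}

/-- The lattice `h ℤ^ι` has no nonzero point in `A`. This is the property of random lattices whose
probability is to be bounded. -/
def Avoids (A : Set (ι → ℝ)) (h : Matrix ι ι ℝ) : Prop :=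
  ∀ x : ι → ℤ, x ≠ 0 → (h *ᵥ fun i => (x i : ℝ)) ∉ A

/-- The sublattice of `g ℤ^ι` orthogonal to `ξ` modulo `p`, scaled by `N⁻¹`, has no nonzero point
in `A`. These scaled sublattices are the Hecke neighbours to which the second moment bound
applies. -/
def AvoidsMod (A : Set (ι → ℝ)) (N : ℕ) (g : Matrix ι ι ℝ) (ξ : ι → ZMod p) : Prop :=
  ∀ x : ι → ℤ, x ≠ 0 → ξ ⬝ᵥ (fun i => (x i : ZMod p)) = 0 →
    (N : ℝ)⁻¹ • (g *ᵥ fun i => (x i : ℝ)) ∉ A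

lemma AvoidsMod.smul [Fact p.Prime] {A : Set (ι → ℝ)} {N : ℕ} {g : Matrix ι ι ℝ} {ξ : ι → ZMod p}
    (h : AvoidsMod A N g ξ) {c : ZMod p} (hc : c ≠ 0) : AvoidsMod A N g (c • ξ) := by
  intro x hx hξ
  rw [smul_dotProduct, smul_eq_mul] at hξ
  exact h x hx ((mul_eq_zero.1 hξ).resolve_left hc)

lemma exists_heckeFrame_mulVec_eq_smul [Fact p.Prime] (N : ℕ) (η : Fin m → ZMod p)
    {V : Matrix (Fin (m + 1)) (Fin (m + 1)) ℤ} (hV : V.det ≠ 0) {x : Fin (m + 1) → ℤ} (hx : x ≠ 0)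
    (hVx : frameRow p V ⬝ᵥ (fun i => (x i : ZMod p)) = 0) :
    ∃ y : Fin (m + 1) → ℤ, y ≠ 0 ∧
      (heckeFrame N η V *ᵥ fun i => (x i : ℝ)) = (N : ℝ) • fun i => (y i : ℝ) := by
  have hp : p ≠ 0 := (Fact.out : p.Prime).ne_zero
  have hdvd : (p : ℤ) ∣ (V *ᵥ x) 0 := by
    rw [← ZMod.intCast_zmod_eq_zero_iff_dvd]
    simpa [mulVec, dotProduct, frameRow] using hVx
  choose y hy using dvd_heckeBasis_mulVec η hdvd
  refine ⟨y, ?_, funext fun i => ?_⟩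
  · rintro rfl
    have hdet : (heckeBasis p η * V).det ≠ 0 := by
      rw [det_mul, det_heckeBasis]
      exact mul_ne_zero (pow_ne_zero _ (Nat.cast_ne_zero.2 hp)) hV
    refine hx (eq_zero_of_mulVec_eq_zero hdet (funext fun i => ?_))
    rw [← mulVec_mulVec, hy, Pi.zero_apply, mul_zero]
  · have hp' : (p : ℝ) ≠ 0 := Nat.cast_ne_zero.2 hp
    rw [heckeFrame_mulVec, hy, Pi.smul_apply, smul_eq_mul]
    push_cast
    field_simp

lemma Avoids.avoidsMod [Fact p.Prime] {A : Set (Fin (m + 1) → ℝ)}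
    {g : Matrix (Fin (m + 1)) (Fin (m + 1)) ℝ} {N : ℕ} (hN : N ≠ 0) (η : Fin m → ZMod p)
    {V : Matrix (Fin (m + 1)) (Fin (m + 1)) ℤ} (hV : V.det ≠ 0)
    (h : Avoids A (g * (heckeFrame N η V)⁻¹)) : AvoidsMod A N g (frameRow p V) := by
  intro x hx hVx
  have hF := det_heckeFrame_ne_zero hN η hV
  obtain ⟨y, hy0, hy⟩ := exists_heckeFrame_mulVec_eq_smul N η hV hx hVx
  have hgy : (N : ℝ)⁻¹ • (g *ᵥ fun i => (x i : ℝ)) =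
      (g * (heckeFrame N η V)⁻¹) *ᵥ fun i => (y i : ℝ) := by
    calc (N : ℝ)⁻¹ • (g *ᵥ fun i => (x i : ℝ))
        = (N : ℝ)⁻¹ • ((g * (heckeFrame N η V)⁻¹) *ᵥ heckeFrame N η V *ᵥ fun i => (x i : ℝ)) := by
          rw [mulVec_mulVec, Matrix.mul_assoc, nonsing_inv_mul _ hF.isUnit, Matrix.mul_one]
      _ = (g * (heckeFrame N η V)⁻¹) *ᵥ fun i => (y i : ℝ) := by
          rw [hy, mulVec_smul, smul_smul, inv_mul_cancel₀ (Nat.cast_ne_zero.2 hN), one_smul]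
  rw [hgy]
  exact h y hy0

open Finset Classical in
lemma exists_card_mul_le_card_avoidsMod (m D : ℕ) {R : ℝ} (hR : 1 ≤ R) :
    ∃ C : ℕ, ∀ (N p : ℕ) [Fact p.Prime], N ≠ 0 → D < p → ∀ (A : Set (Fin (m + 1) → ℝ))
      (g : Matrix (Fin (m + 1)) (Fin (m + 1)) ℝ)
      (T : Finset ((Fin m → ZMod p) × IntFrame (Fin (m + 1)) D)),
      (∀ τ ∈ T, InBox R (g * (heckeFrame N τ.1 τ.2.1)⁻¹) ∧
        Avoids A (g * (heckeFrame N τ.1 τ.2.1)⁻¹)) →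
      #T * (p - 1) ≤ #{ξ : Fin (m + 1) → ZMod p | AvoidsMod A N g ξ} * C := by
  obtain ⟨C, hC⟩ := exists_card_collinear_le m D hR
  refine ⟨C, fun N p _ hN hDp A g T hT => ?_⟩
  refine card_mul_le_card_mul (fun τ ξ => ∃ c : ZMod p, c ≠ 0 ∧ ξ = c • frameRow p τ.2.1)
    (fun τ hτ => ?_) fun ξ _ => ?_
  · have hcard : #(univ.erase (0 : ZMod p)) = p - 1 := by
      rw [card_erase_of_mem (mem_univ _), card_univ, ZMod.card]
    rw [← hcard]
    refine card_le_card_of_injOn (fun c => c • frameRow p τ.2.1) (fun c hc => ?_)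
      (smul_left_injective _ (frameRow_ne_zero hDp τ.2)).injOn
    have hc0 : c ≠ 0 := ne_of_mem_erase hc
    simp only [mem_coe, mem_bipartiteAbove, mem_filter_univ]
    exact ⟨((hT τ hτ).2.avoidsMod hN τ.1 τ.2.2.1).smul hc0, c, hc0, rfl⟩
  · refine hC N p hN hDp g ξ _ fun τ hτ => ?_
    obtain ⟨hτT, hξ⟩ := (mem_bipartiteBelow _).1 hτ
    exact ⟨(hT τ hτT).1, hξ⟩

lemma isClosed_setOf_avoids {A : Set (ι → ℝ)} (hA : IsOpen A) :
    IsClosed {h : ι → ι → ℝ | Avoids A (Matrix.of h)} := by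
  simp only [Avoids, Set.ofPred_forall]
  exact isClosed_iInter fun x => isClosed_iInter fun _ => hA.isClosed_compl.preimage
    (continuous_id.matrix_mulVec continuous_const)

lemma isClosed_setOf_avoidsMod {A : Set (ι → ℝ)} (hA : IsOpen A) (N : ℕ) (ξ : ι → ZMod p) :
    IsClosed {h : ι → ι → ℝ | AvoidsMod A N (Matrix.of h) ξ} := by
  simp only [AvoidsMod, Set.ofPred_forall]
  exact isClosed_iInter fun x => isClosed_iInter fun _ => isClosed_iInter fun _ =>
    hA.isClosed_compl.preimage
      ((continuous_const_smul _).comp (continuous_id.matrix_mulVec continuous_const))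

variable [DecidableEq ι]

lemma isClosed_setOf_inBox (R : ℝ) : IsClosed {h : ι → ι → ℝ | InBox R (Matrix.of h)} := by
  have hdet : Continuous fun h : ι → ι → ℝ => (Matrix.of h).det := continuous_id.matrix_det
  have hentries : IsClosed {h : ι → ι → ℝ | ∀ i j, |h i j| ≤ R} := by
    simp only [Set.ofPred_forall]
    exact isClosed_iInter fun i => isClosed_iInter fun j =>
      isClosed_le (continuous_apply_apply i j).abs continuous_const
  exact hentries.inter (isClosed_le continuous_const hdet.abs)

/-- Right multiplication by a matrix, as a linear map on the arrays `ι → ι → ℝ`, which carry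
Lebesgue measure whereas `Matrix ι ι ℝ` has no measurable structure. -/
noncomputable def rightMul (F : Matrix ι ι ℝ) : (ι → ι → ℝ) →ₗ[ℝ] (ι → ι → ℝ) :=
  LinearMap.pi fun i => Matrix.toLin' Fᵀ ∘ₗ LinearMap.proj i

lemma of_rightMul (F : Matrix ι ι ℝ) (h : ι → ι → ℝ) :
    Matrix.of (rightMul F h) = Matrix.of h * F := by
  ext i j
  simp only [rightMul, mulVec_transpose, Matrix.mul_apply_eq_vecMul, LinearMap.pi_apply,
    LinearMap.comp_apply, LinearMap.proj_apply, Matrix.toLin'_apply, Matrix.of_apply]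
  rfl

lemma continuous_rightMul (F : Matrix ι ι ℝ) : Continuous (rightMul F) :=
  LinearMap.continuous_of_finiteDimensional _

lemma det_rightMul (F : Matrix ι ι ℝ) : LinearMap.det (rightMul F) = F.det ^ Fintype.card ι := by
  simp only [rightMul, LinearMap.det_pi, LinearMap.det_toLin', det_transpose, Finset.prod_const,
    Finset.card_univ]

lemma volume_rightMul_preimage {F : Matrix ι ι ℝ} (hF : F.det ≠ 0) (W : Set (ι → ι → ℝ)) :
    volume (rightMul F ⁻¹' W) = ENNReal.ofReal (|F.det| ^ Fintype.card ι)⁻¹ * volume W := by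
  rw [Measure.addHaar_preimage_linearMap _ (det_rightMul F ▸ pow_ne_zero _ hF), det_rightMul,
    abs_inv, abs_pow]

lemma volume_inter_rightMul_preimage {F : Matrix ι ι ℝ} (hF : F.det ≠ 0) (K K' : Set (ι → ι → ℝ)) :
    volume (K ∩ rightMul F ⁻¹' K') =
      ENNReal.ofReal (|F.det| ^ Fintype.card ι)⁻¹ * volume (rightMul F⁻¹ ⁻¹' K ∩ K') := by
  have hinv : ∀ h, rightMul F⁻¹ (rightMul F h) = h := fun h => by
    refine Matrix.of.injective ?_
    rw [of_rightMul, of_rightMul, Matrix.mul_assoc, mul_nonsing_inv _ hF.isUnit, Matrix.mul_one]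
  have hset : rightMul F ⁻¹' (rightMul F⁻¹ ⁻¹' K ∩ K') = K ∩ rightMul F ⁻¹' K' := by
    ext h
    simp only [Set.mem_preimage, Set.mem_inter_iff, hinv]
  rw [← hset, volume_rightMul_preimage hF]

end Avoidance

section Averaging

open scoped ENNReal
open Finset

variable {m p : ℕ}

lemma tsum_measure_le_lintegral {α κ : Type*} [MeasurableSpace α] [Countable κ] (μ : Measure α)
    {W : κ → Set α} (hW : ∀ k, MeasurableSet (W k)) {f : α → ℝ≥0∞}
    (hf : ∀ (x : α) (s : Finset κ), (∀ k ∈ s, x ∈ W k) → (#s : ℝ≥0∞) ≤ f x) :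
    ∑' k, μ (W k) ≤ ∫⁻ x, f x ∂μ := by
  classical
  calc ∑' k, μ (W k) = ∑' k, ∫⁻ x, (W k).indicator 1 x ∂μ := by
        simp only [lintegral_indicator_one (hW _)]
    _ = ∫⁻ x, ∑' k, (W k).indicator 1 x ∂μ :=
        (lintegral_tsum fun k => (measurable_one.indicator (hW k)).aemeasurable).symm
    _ ≤ ∫⁻ x, f x ∂μ := by
        refine lintegral_mono fun x => ?_
        rw [ENNReal.tsum_eq_iSup_sum]
        refine iSup_le fun s => ?_
        simp only [Set.indicator_apply, Pi.one_apply, sum_boole]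
        exact hf x _ fun k hk => (mem_filter.1 hk).2

open Classical in
/-- The proportion of the vectors modulo `p` whose orthogonal sublattice avoids `A`, in `ℝ≥0∞` so
that it can be integrated over `g` without further conditions. -/
noncomputable def avoidRatio {ι : Type*} [Fintype ι] [DecidableEq ι] (p N : ℕ) [NeZero p]
    (A : Set (ι → ℝ)) (g : Matrix ι ι ℝ) : ℝ≥0∞ :=
  #{ξ : ι → ZMod p | AvoidsMod A N g ξ} / (p : ℝ≥0∞) ^ Fintype.card ι

lemma exists_card_le_avoidRatio (m D : ℕ) {R : ℝ} (hR : 1 ≤ R) :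
    ∃ C : ℕ, ∀ (N p : ℕ) [Fact p.Prime], N ≠ 0 → D < p → ∀ (A : Set (Fin (m + 1) → ℝ))
      (g : Matrix (Fin (m + 1)) (Fin (m + 1)) ℝ)
      (T : Finset ((Fin m → ZMod p) × IntFrame (Fin (m + 1)) D)),
      (∀ τ ∈ T, InBox R (g * (heckeFrame N τ.1 τ.2.1)⁻¹) ∧
        Avoids A (g * (heckeFrame N τ.1 τ.2.1)⁻¹)) →
      (#T : ℝ≥0∞) ≤ C * p ^ m * avoidRatio p N A g := by
  classical
  obtain ⟨C, hC⟩ := exists_card_mul_le_card_avoidsMod m D hR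
  refine ⟨2 * C, fun N p _ hN hDp A g T hT => ?_⟩
  have hp : p ≤ 2 * (p - 1) := by have := (Fact.out : p.Prime).two_le; omega
  have hp0 : (p : ℝ≥0∞) ^ (m + 1) ≠ 0 :=
    pow_ne_zero _ (Nat.cast_ne_zero.2 (Fact.out : p.Prime).ne_zero)
  have hcard : #T * p ^ (m + 1) ≤
      2 * C * p ^ m * #{ξ : Fin (m + 1) → ZMod p | AvoidsMod A N g ξ} := by
    calc #T * p ^ (m + 1) ≤ #T * (p ^ m * (2 * (p - 1))) := by rw [pow_succ]; gcongr
      _ = 2 * p ^ m * (#T * (p - 1)) := by ring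
      _ ≤ 2 * p ^ m * (#{ξ : Fin (m + 1) → ZMod p | AvoidsMod A N g ξ} * C) :=
        Nat.mul_le_mul_left _ (hC N p hN hDp A g T hT)
      _ = 2 * C * p ^ m * #{ξ : Fin (m + 1) → ZMod p | AvoidsMod A N g ξ} := by ring
  rw [avoidRatio, Fintype.card_fin, ← mul_div_assoc,
    ENNReal.le_div_iff_mul_le (Or.inl hp0) (Or.inl (by finiteness))]
  exact_mod_cast hcard

lemma ofReal_inv_abs_det_heckeFrame_pow_le [Fact p.Prime] {N : ℕ} (hpN : p ≤ 2 * N ^ (m + 1))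
    (η : Fin m → ZMod p) {V : Matrix (Fin (m + 1)) (Fin (m + 1)) ℤ} (hV : V.det ≠ 0) (k : ℕ) :
    ENNReal.ofReal (|(heckeFrame N η V).det| ^ k)⁻¹ ≤ 2 ^ k := by
  have hp : (0 : ℝ) < p := Nat.cast_pos.2 (Fact.out : p.Prime).pos
  have hV1 : (1 : ℝ) ≤ |(V.det : ℝ)| := mod_cast Int.one_le_abs hV
  have hNp : (2 : ℝ)⁻¹ ≤ N ^ (m + 1) / p := by
    rw [le_div_iff₀ hp, inv_mul_le_iff₀ two_pos]
    exact_mod_cast hpN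
  have hdet : (2 : ℝ)⁻¹ ≤ |(heckeFrame N η V).det| := by
    rw [det_heckeFrame, abs_mul, abs_of_nonneg (by positivity : (0 : ℝ) ≤ N ^ (m + 1) / p)]
    exact hNp.trans (le_mul_of_one_le_right (by positivity) hV1)
  calc ENNReal.ofReal (|(heckeFrame N η V).det| ^ k)⁻¹ ≤ ENNReal.ofReal (2 ^ k) := by
        rw [← inv_pow]
        gcongr
        exact inv_le_of_inv_le₀ two_pos hdet
    _ = 2 ^ k := by rw [ENNReal.ofReal_pow zero_le_two, ENNReal.ofReal_ofNat]

lemma pow_mul_volume_le_tsum [Fact p.Prime] {N D : ℕ} (hN : N ≠ 0) (hpN : p ≤ 2 * N ^ (m + 1))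
    {K K' : Set (Fin (m + 1) → Fin (m + 1) → ℝ)}
    (hK : ∀ η : Fin m → ZMod p, NoShortVec (heckeFrame N η 1) (1 / 12) → ∀ h ∈ K,
      ∃ V : IntFrame (Fin (m + 1)) D, rightMul (heckeFrame N η V.1) h ∈ K') :
    (p : ℝ≥0∞) ^ m * volume K ≤ 2 ^ (m + 2) * ∑' τ : (Fin m → ZMod p) × IntFrame (Fin (m + 1)) D,
      volume (rightMul (heckeFrame N τ.1 τ.2.1)⁻¹ ⁻¹' K ∩ K') := by
  classical
  have : Countable (Matrix (Fin (m + 1)) (Fin (m + 1)) ℤ) :=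
    inferInstanceAs (Countable (Fin (m + 1) → Fin (m + 1) → ℤ))
  set W : (Fin m → ZMod p) → IntFrame (Fin (m + 1)) D → Set (Fin (m + 1) → Fin (m + 1) → ℝ) :=
    fun η V => rightMul (heckeFrame N η V.1)⁻¹ ⁻¹' K ∩ K'
  set S : Finset (Fin m → ZMod p) := {η | NoShortVec (heckeFrame N η 1) (1 / 12)}
  have hcover : ∀ η ∈ S, volume K ≤ 2 ^ (m + 1) * ∑' V, volume (W η V) := by
    intro η hη
    calc volume K ≤ volume (⋃ V : IntFrame (Fin (m + 1)) D,
          K ∩ rightMul (heckeFrame N η V.1) ⁻¹' K') := measure_mono fun h hh =>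
            Set.mem_iUnion.2 ((hK η (mem_filter.1 hη).2 h hh).imp fun V hV => ⟨hh, hV⟩)
      _ ≤ ∑' V : IntFrame (Fin (m + 1)) D,
          volume (K ∩ rightMul (heckeFrame N η V.1) ⁻¹' K') := measure_iUnion_le _
      _ ≤ ∑' V, 2 ^ (m + 1) * volume (W η V) := by
          refine ENNReal.tsum_le_tsum fun V => ?_
          rw [volume_inter_rightMul_preimage (det_heckeFrame_ne_zero hN η V.2.1), Fintype.card_fin]
          gcongr
          exact ofReal_inv_abs_det_heckeFrame_pow_le hpN η V.2.1 _
      _ = 2 ^ (m + 1) * ∑' V, volume (W η V) := ENNReal.tsum_mul_left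
  calc (p : ℝ≥0∞) ^ m * volume K ≤ 2 * #S * volume K := by
        gcongr
        exact_mod_cast pow_le_two_mul_card_noShortVec hN hpN
    _ = 2 * ∑ _ ∈ S, volume K := by rw [sum_const, nsmul_eq_mul, mul_assoc]
    _ ≤ 2 * ∑ η, 2 ^ (m + 1) * ∑' V, volume (W η V) := by
        gcongr
        exact (sum_le_sum hcover).trans (sum_le_univ_sum_of_nonneg fun _ => zero_le)
    _ = 2 ^ (m + 2) * ∑' τ : (Fin m → ZMod p) × IntFrame (Fin (m + 1)) D, volume (W τ.1 τ.2) := by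
        rw [ENNReal.tsum_prod', tsum_fintype, ← mul_sum, ← mul_assoc, ← pow_succ']

theorem exists_volume_avoids_le_lintegral_avoidRatio (m : ℕ) {R : ℝ} (hR : 1 ≤ R) :
    ∃ (R' : ℝ) (C D : ℕ), 1 ≤ R' ∧ ∀ (N p : ℕ) [Fact p.Prime], N ≠ 0 → N ^ (m + 1) ≤ p →
      p ≤ 2 * N ^ (m + 1) → D < p → ∀ A : Set (Fin (m + 1) → ℝ), IsOpen A →
      volume {h : Fin (m + 1) → Fin (m + 1) → ℝ |
          InBox R (Matrix.of h) ∧ Avoids A (Matrix.of h)} ≤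
        C * ∫⁻ g in {g : Fin (m + 1) → Fin (m + 1) → ℝ | InBox R' (Matrix.of g)},
          avoidRatio p N A (Matrix.of g) := by
  obtain ⟨R', D, hR', hD⟩ := exists_inBox_mul_heckeFrame m hR
  obtain ⟨C, hC⟩ := exists_card_le_avoidRatio m D hR
  refine ⟨R', 2 ^ (m + 2) * C, D, hR', fun N p _ hN hNp hpN hDp A hA => ?_⟩
  have : Countable (Matrix (Fin (m + 1)) (Fin (m + 1)) ℤ) :=
    inferInstanceAs (Countable (Fin (m + 1) → Fin (m + 1) → ℤ))
  set K := {h : Fin (m + 1) → Fin (m + 1) → ℝ | InBox R (Matrix.of h) ∧ Avoids A (Matrix.of h)}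
  set K' := {g : Fin (m + 1) → Fin (m + 1) → ℝ | InBox R' (Matrix.of g)}
  set W : (Fin m → ZMod p) × IntFrame (Fin (m + 1)) D → Set (Fin (m + 1) → Fin (m + 1) → ℝ) :=
    fun τ => rightMul (heckeFrame N τ.1 τ.2.1)⁻¹ ⁻¹' K
  have hW : ∀ τ, MeasurableSet (W τ) := fun τ => (((isClosed_setOf_inBox R).inter
    (isClosed_setOf_avoids hA)).preimage (continuous_rightMul _)).measurableSet
  have hpm0 : (p : ℝ≥0∞) ^ m ≠ 0 :=
    pow_ne_zero _ (Nat.cast_ne_zero.2 (Fact.out : p.Prime).ne_zero)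
  refine (ENNReal.mul_le_mul_iff_right hpm0 (by finiteness)).1 ?_
  calc (p : ℝ≥0∞) ^ m * volume K ≤ 2 ^ (m + 2) * ∑' τ, volume (W τ ∩ K') :=
        pow_mul_volume_le_tsum hN hpN fun η hη h hh => by
          simpa only [K', Set.mem_ofPred_eq, of_rightMul] using hD _ hh.1 N p hNp hpN η hη
    _ = 2 ^ (m + 2) * ∑' τ, volume.restrict K' (W τ) := by
        simp only [Measure.restrict_apply (hW _)]
    _ ≤ 2 ^ (m + 2) * ∫⁻ g in K', C * p ^ m * avoidRatio p N A (Matrix.of g) := by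
        gcongr
        refine tsum_measure_le_lintegral _ hW fun g T hT => hC N p hN hDp A _ T fun τ hτ => ?_
        simpa only [W, K, Set.mem_preimage, Set.mem_ofPred_eq, of_rightMul] using hT τ hτ
    _ = p ^ m * ((2 ^ (m + 2) * C : ℕ) * ∫⁻ g in K', avoidRatio p N A (Matrix.of g)) := by
        rw [lintegral_const_mul' _ _ (by finiteness)]
        push_cast
        ring

end Averaging

section LatticePoints

open scoped Pointwise Topology

variable {ι : Type*}

/-- The integer points of the dilate `t • s`, for `t ≠ 0`. -/
def scaledPts (s : Set (ι → ℝ)) (t : ℝ) : Set (ι → ℤ) := {z | t⁻¹ • (fun i => (z i : ℝ)) ∈ s}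

variable {s : Set (ι → ℝ)} {ρ t : ℝ}

lemma smul_mem_scaledPts_iff (a : ℕ) {w : ι → ℤ} :
    (a : ℤ) • w ∈ scaledPts s t ↔ w ∈ scaledPts s (t / a) := by
  have h : t⁻¹ • (fun i => (((a : ℤ) • w) i : ℝ)) = (t / a)⁻¹ • fun i => (w i : ℝ) := by
    ext i
    simp only [Pi.smul_apply, smul_eq_mul, inv_div]
    push_cast
    ring
  simp only [scaledPts, Set.mem_ofPred_eq, h]

lemma abs_le_of_mem_scaledPts (hs : ∀ x ∈ s, ∀ i, |x i| ≤ ρ) (ht : 0 < t) {z : ι → ℤ}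
    (hz : z ∈ scaledPts s t) (i : ι) : |(z i : ℝ)| ≤ ρ * t := by
  have h := hs _ hz i
  rwa [Pi.smul_apply, smul_eq_mul, abs_mul, abs_of_pos (inv_pos.2 ht), inv_mul_le_iff₀' ht] at h

lemma scaledPts_subset_Icc (hs : ∀ x ∈ s, ∀ i, |x i| ≤ ρ) (ht : 0 < t) :
    scaledPts s t ⊆ Set.Icc (fun _ => -⌊ρ * t⌋) (fun _ => ⌊ρ * t⌋) := by
  refine fun z hz => Set.mem_Icc.2 (forall_and.1 fun i => abs_le.1 (Int.le_floor.2 ?_))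
  exact_mod_cast abs_le_of_mem_scaledPts hs ht hz i

lemma finite_scaledPts [Finite ι] (hs : ∀ x ∈ s, ∀ i, |x i| ≤ ρ) (ht : 0 < t) :
    (scaledPts s t).Finite := by
  classical
  have := Fintype.ofFinite ι
  exact (Set.finite_Icc _ _).subset (scaledPts_subset_Icc hs ht)

lemma image_scaledPts [Finite ι] {a : ℝ} {N : ℕ} (hN : N ≠ 0) (ha : a ≠ 0) :
    (fun z : ι → ℤ => (N : ℝ)⁻¹ • fun i => (z i : ℝ)) '' scaledPts s (N / a) =
      a⁻¹ • s ∩ (N : ℝ)⁻¹ • (Submodule.span ℤ (Set.range (Pi.basisFun ℝ ι)) : Set (ι → ℝ)) := by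
  have hN' : (N : ℝ) ≠ 0 := Nat.cast_ne_zero.2 hN
  have hmem : ∀ z : ι → ℤ, z ∈ scaledPts s (N / a) ↔
      (N : ℝ)⁻¹ • (fun i => (z i : ℝ)) ∈ a⁻¹ • s := fun z => by
    rw [Set.mem_inv_smul_set_iff₀ ha, smul_smul, scaledPts, Set.mem_ofPred_eq, inv_div,
      div_eq_mul_inv]
  ext v
  rw [Set.mem_image, Set.mem_inter_iff, Set.mem_inv_smul_set_iff₀ hN', SetLike.mem_coe,
    mem_span_int_range_basisFun_iff]
  constructor
  · rintro ⟨z, hz, rfl⟩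
    exact ⟨(hmem z).1 hz, z, (smul_inv_smul₀ hN' _).symm⟩
  · rintro ⟨hv, z, hz⟩
    have hzv : (N : ℝ)⁻¹ • (fun i => (z i : ℝ)) = v := by rw [hz, inv_smul_smul₀ hN']
    exact ⟨z, (hmem z).2 (hzv ▸ hv), hzv⟩

variable [Fintype ι]

lemma eq_or_eq_neg_of_gcd_eq_one {x y : ι → ℤ} (hx : Finset.univ.gcd x = 1)
    (hy : Finset.univ.gcd y = 1) (h : ∀ i j, x i * y j = x j * y i) : y = x ∨ y = -x := by
  have habs : ∀ j, |y j| = |x j| := fun j => by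
    calc |y j| = Finset.univ.gcd fun i => x i * y j := by
          rw [Finset.gcd_mul_right, hx, one_mul, Int.abs_eq_normalize]
      _ = Finset.univ.gcd fun i => x j * y i := by simp only [h _ j]
      _ = |x j| := by rw [Finset.gcd_mul_left, hy, mul_one, Int.abs_eq_normalize]
  obtain ⟨i, hi⟩ : ∃ i, x i ≠ 0 := by
    by_contra! h0
    exact zero_ne_one ((Finset.gcd_eq_zero_iff.2 fun i _ => h0 i).symm.trans hx)
  refine (abs_eq_abs.1 (habs i)).imp (fun hyi => funext fun j => ?_) fun hyi => funext fun j => ?_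
  · exact mul_left_cancel₀ hi (by rw [h i j, hyi, mul_comm])
  · exact mul_left_cancel₀ hi (by rw [h i j, hyi, Pi.neg_apply, mul_neg, mul_neg, mul_comm])

lemma exists_eq_smul_of_gcd_ne_one {z : ι → ℤ} (hz : z ≠ 0) (h : Finset.univ.gcd z ≠ 1) :
    ∃ (a : ℕ) (w : ι → ℤ), z = ((a + 2 : ℕ) : ℤ) • w := by
  obtain ⟨i, hi⟩ := Function.ne_iff.1 hz
  obtain ⟨w, hw, -⟩ := Finset.extract_gcd z ⟨i, Finset.mem_univ i⟩
  have h0 : Finset.univ.gcd z ≠ 0 := fun h => hi (Finset.gcd_eq_zero_iff.1 h i (Finset.mem_univ i))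
  have hnonneg : 0 ≤ Finset.univ.gcd z := by
    rw [← Finset.normalize_gcd, ← Int.abs_eq_normalize]
    exact abs_nonneg _
  refine ⟨(Finset.univ.gcd z).toNat - 2, w, funext fun i => ?_⟩
  have hcast : (((Finset.univ.gcd z).toNat - 2 + 2 : ℕ) : ℤ) = Finset.univ.gcd z := by omega
  rw [hcast, Pi.smul_apply, smul_eq_mul]
  exact hw i (Finset.mem_univ i)

lemma ncard_scaledPts_le (hs : ∀ x ∈ s, ∀ i, |x i| ≤ ρ) (hs0 : 0 ∉ s) (hρ : 0 ≤ ρ) (ht : 0 < t) :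
    ((scaledPts s t).ncard : ℝ) ≤ (3 * (ρ * t)) ^ Fintype.card ι := by
  classical
  rcases (scaledPts s t).eq_empty_or_nonempty with h | ⟨z, hz⟩
  · rw [h, Set.ncard_empty, Nat.cast_zero]
    positivity
  obtain ⟨i, hi⟩ : ∃ i, z i ≠ 0 := by
    by_contra! h0
    refine hs0 ?_
    have : t⁻¹ • (fun i => (z i : ℝ)) = 0 := by ext i; simp [h0]
    exact this ▸ hz
  have hρt : 1 ≤ ρ * t :=
    le_trans (mod_cast Int.one_le_abs hi) (abs_le_of_mem_scaledPts hs ht hz i)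
  have hcard : (((Finset.Icc (-⌊ρ * t⌋) ⌊ρ * t⌋).card : ℤ) : ℝ) ≤ 3 * (ρ * t) := by
    have hfloor : 0 ≤ ⌊ρ * t⌋ := Int.floor_nonneg.2 (by positivity)
    rw [Int.card_Icc_of_le _ _ (by omega)]
    push_cast
    linarith [Int.floor_le (ρ * t)]
  calc ((scaledPts s t).ncard : ℝ)
      ≤ ((Finset.Icc (fun _ : ι => -⌊ρ * t⌋) fun _ => ⌊ρ * t⌋).card : ℝ) := by
        rw [← Set.ncard_coe_finset, Finset.coe_Icc]
        exact_mod_cast Set.ncard_le_ncard (scaledPts_subset_Icc hs ht) (Set.finite_Icc _ _)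
    _ ≤ (3 * (ρ * t)) ^ Fintype.card ι := by
        rw [Pi.card_Icc, Finset.prod_const, Finset.card_univ]
        push_cast
        gcongr
        exact_mod_cast hcard

lemma tendsto_ncard_scaledPts_div (hs : Bornology.IsBounded s) (hm : MeasurableSet s)
    (hf : volume (frontier s) = 0) {a : ℝ} (ha : 0 < a) :
    Tendsto (fun N : ℕ => ((scaledPts s (N / a)).ncard : ℝ) / N ^ Fintype.card ι) atTop
      (𝓝 (volume.real s / a ^ Fintype.card ι)) := by
  have hfrontier : volume (frontier (a⁻¹ • s)) = 0 := by
    have : frontier (a⁻¹ • s) = a⁻¹ • frontier s :=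
      ((Homeomorph.smulOfNeZero a⁻¹ (inv_ne_zero ha.ne')).image_frontier s).symm
    rw [this, Measure.addHaar_smul, hf, mul_zero]
  have hvol : volume.real (a⁻¹ • s) = volume.real s / a ^ Fintype.card ι := by
    rw [measureReal_def, Measure.addHaar_smul, ENNReal.toReal_mul,
      ENNReal.toReal_ofReal (abs_nonneg _), abs_of_pos (by positivity), inv_pow,
      Module.finrank_fintype_fun_eq_card, inv_mul_eq_div, measureReal_def]
  rw [← hvol]
  refine (tendsto_card_div_pow_atTop_volume _ (hs.smul₀ _) (hm.const_smul₀ _) hfrontier).congr' ?_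
  filter_upwards [eventually_ne_atTop 0] with N hN
  have hN' : (N : ℝ)⁻¹ ≠ 0 := inv_ne_zero (Nat.cast_ne_zero.2 hN)
  have hinj : Function.Injective fun z : ι → ℤ => (N : ℝ)⁻¹ • fun i => (z i : ℝ) :=
    (smul_right_injective _ hN').comp (Int.cast_injective.comp_left)
  rw [← image_scaledPts hN ha.ne', Nat.card_coe_set_eq, Set.ncard_image_of_injective _ hinj]

lemma tsum_one_div_add_two_sq_le : ∑' a : ℕ, (1 : ℝ) / ((a + 2 : ℕ) : ℝ) ^ 2 ≤ 2 / 3 := by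
  have h := hasSum_zeta_two.summable.sum_add_tsum_nat_add 2
  rw [hasSum_zeta_two.tsum_eq] at h
  norm_num [Finset.sum_range_succ] at h ⊢
  nlinarith [Real.pi_lt_d2, Real.pi_pos]

lemma summable_one_div_add_two_sq : Summable fun a : ℕ => (1 : ℝ) / ((a + 2 : ℕ) : ℝ) ^ 2 :=
  (summable_nat_add_iff 2).2 hasSum_zeta_two.summable

lemma one_div_add_two_pow_le (a : ℕ) {n : ℕ} (hn : 2 ≤ n) :
    (1 : ℝ) / ((a + 2 : ℕ) : ℝ) ^ n ≤ 1 / ((a + 2 : ℕ) : ℝ) ^ 2 := by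
  gcongr
  exact_mod_cast (by omega : 1 ≤ a + 2)

lemma ncard_le_ncard_add_tsum_ncard {α κ : Type*} [Countable κ] {S P : Set α} {T : κ → Set α}
    (hS : S.Finite) (hP : P.Finite) (hT : ∀ a, (T a).Finite)
    (hsum : Summable fun a => ((T a).ncard : ℝ)) (h : S ⊆ P ∪ ⋃ a, T a) :
    (S.ncard : ℝ) ≤ P.ncard + ∑' a, ((T a).ncard : ℝ) := by
  let _ : MeasurableSpace α := ⊤
  have hcount : ∀ {X : Set α}, X.Finite → Measure.count X = ENNReal.ofReal X.ncard := fun hX => by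
    rw [Measure.count_apply_finite _ hX, ENNReal.ofReal_natCast, Set.ncard_eq_toFinset_card _ hX]
  have htsum : 0 ≤ ∑' a, ((T a).ncard : ℝ) := tsum_nonneg fun _ => Nat.cast_nonneg _
  refine (ENNReal.ofReal_le_ofReal_iff (by positivity)).1 ?_
  calc ENNReal.ofReal S.ncard = Measure.count S := (hcount hS).symm
    _ ≤ Measure.count P + ∑' a, Measure.count (T a) := (measure_mono h).trans
        ((measure_union_le _ _).trans (add_le_add_right (measure_iUnion_le _) _))
    _ = ENNReal.ofReal (P.ncard + ∑' a, ((T a).ncard : ℝ)) := by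
        rw [ENNReal.ofReal_add (Nat.cast_nonneg _) htsum,
          ENNReal.ofReal_tsum_of_nonneg (fun _ => Nat.cast_nonneg _) hsum, hcount hP]
        simp only [hcount (hT _)]

lemma ncard_scaledPts_div_le (hn : 2 ≤ Fintype.card ι) (hs : ∀ x ∈ s, ∀ i, |x i| ≤ ρ)
    (hs0 : 0 ∉ s) (hρ : 0 ≤ ρ) {N : ℕ} (hN : N ≠ 0) (a : ℕ) :
    ((scaledPts s (N / (a + 2 : ℕ))).ncard : ℝ) / N ^ Fintype.card ι ≤
      (3 * ρ) ^ Fintype.card ι * (1 / ((a + 2 : ℕ) : ℝ) ^ 2) := by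
  have hN' : (0 : ℝ) < N := by positivity
  rw [div_le_iff₀ (by positivity)]
  calc ((scaledPts s (N / (a + 2 : ℕ))).ncard : ℝ)
      ≤ (3 * (ρ * (N / (a + 2 : ℕ)))) ^ Fintype.card ι :=
        ncard_scaledPts_le hs hs0 hρ (by positivity)
    _ = (3 * ρ) ^ Fintype.card ι * (1 / ((a + 2 : ℕ) : ℝ) ^ Fintype.card ι) *
          N ^ Fintype.card ι := by
        rw [← _root_.one_div_pow, ← mul_pow, ← mul_pow]
        ring
    _ ≤ (3 * ρ) ^ Fintype.card ι * (1 / ((a + 2 : ℕ) : ℝ) ^ 2) * N ^ Fintype.card ι := by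
        gcongr ?_ * ?_ * _
        exact one_div_add_two_pow_le a hn

lemma tendsto_tsum_ncard_scaledPts (hn : 2 ≤ Fintype.card ι) (hs : Bornology.IsBounded s)
    (hm : MeasurableSet s) (hf : volume (frontier s) = 0) (hsρ : ∀ x ∈ s, ∀ i, |x i| ≤ ρ)
    (hρ : 0 ≤ ρ) (hs0 : 0 ∉ s) :
    Tendsto (fun N : ℕ => ∑' a : ℕ,
        ((scaledPts s (N / (a + 2 : ℕ))).ncard : ℝ) / N ^ Fintype.card ι) atTop
      (𝓝 (∑' a : ℕ, volume.real s / ((a + 2 : ℕ) : ℝ) ^ Fintype.card ι)) := by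
  refine tendsto_tsum_of_dominated_convergence
    (summable_one_div_add_two_sq.mul_left ((3 * ρ) ^ Fintype.card ι))
    (fun a => tendsto_ncard_scaledPts_div hs hm hf (by positivity)) ?_
  filter_upwards [eventually_ne_atTop 0] with N hN a
  rw [Real.norm_of_nonneg (by positivity)]
  exact ncard_scaledPts_div_le hn hsρ hs0 hρ hN a

lemma tsum_div_add_two_pow_le {v : ℝ} (hv : 0 ≤ v) {n : ℕ} (hn : 2 ≤ n) :
    ∑' a : ℕ, v / ((a + 2 : ℕ) : ℝ) ^ n ≤ 2 / 3 * v := by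
  have hle : ∀ a : ℕ, (1 : ℝ) / ((a + 2 : ℕ) : ℝ) ^ n ≤ 1 / ((a + 2 : ℕ) : ℝ) ^ 2 :=
    fun a => one_div_add_two_pow_le a hn
  have hsummable : Summable fun a : ℕ => (1 : ℝ) / ((a + 2 : ℕ) : ℝ) ^ n :=
    summable_one_div_add_two_sq.of_nonneg_of_le (fun _ => by positivity) hle
  calc ∑' a : ℕ, v / ((a + 2 : ℕ) : ℝ) ^ n = (∑' a : ℕ, 1 / ((a + 2 : ℕ) : ℝ) ^ n) * v := by
        rw [← tsum_mul_right]
        simp only [one_div_mul_eq_div]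
    _ ≤ 2 / 3 * v := by
        gcongr
        exact (hsummable.tsum_le_tsum hle summable_one_div_add_two_sq).trans
          tsum_one_div_add_two_sq_le

lemma ncard_scaledPts_le_ncard_gcd_eq_one_add (hn : 2 ≤ Fintype.card ι)
    (hsρ : ∀ x ∈ s, ∀ i, |x i| ≤ ρ) (hρ : 0 ≤ ρ) (hs0 : 0 ∉ s) {N : ℕ} (hN : N ≠ 0) :
    ((scaledPts s N).ncard : ℝ) ≤ {z | z ∈ scaledPts s N ∧ Finset.univ.gcd z = 1}.ncard +
      ∑' a : ℕ, ((scaledPts s (N / (a + 2 : ℕ))).ncard : ℝ) := by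
  have hfin : ∀ {t : ℝ}, 0 < t → (scaledPts s t).Finite := fun ht => finite_scaledPts hsρ ht
  have hN' : (0 : ℝ) < N := by positivity
  let T : ℕ → Set (ι → ℤ) := fun a =>
    (fun w => ((a + 2 : ℕ) : ℤ) • w) '' scaledPts s (N / (a + 2 : ℕ))
  have hT : ∀ a, (T a).ncard = (scaledPts s (N / (a + 2 : ℕ))).ncard := fun a =>
    Set.ncard_image_of_injective _ (smul_right_injective _ (Nat.cast_ne_zero.2 (by omega)))
  have hsummable : Summable fun a => ((T a).ncard : ℝ) := by
    simp only [hT]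
    refine (summable_div_const_iff (pow_pos hN' (Fintype.card ι)).ne').1 ?_
    exact (summable_one_div_add_two_sq.mul_left _).of_nonneg_of_le (fun _ => by positivity)
      (ncard_scaledPts_div_le hn hsρ hs0 hρ hN)
  have hcover : scaledPts s N ⊆ {z | z ∈ scaledPts s N ∧ Finset.univ.gcd z = 1} ∪ ⋃ a, T a := by
    intro z hz
    by_cases hgcd : Finset.univ.gcd z = 1
    · exact Or.inl ⟨hz, hgcd⟩
    have hz0 : z ≠ 0 := by
      rintro rfl
      refine hs0 ?_
      have : (N : ℝ)⁻¹ • (fun i => ((0 : ι → ℤ) i : ℝ)) = 0 := by ext i; simp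
      exact this ▸ hz
    obtain ⟨a, w, rfl⟩ := exists_eq_smul_of_gcd_ne_one hz0 hgcd
    exact Or.inr (Set.mem_iUnion.2 ⟨a, w, (smul_mem_scaledPts_iff _).1 hz, rfl⟩)
  have h := ncard_le_ncard_add_tsum_ncard (T := T) (hfin hN') ((hfin hN').subset fun z hz => hz.1)
    (fun a => (hfin (by positivity)).image _) hsummable hcover
  simpa only [hT] using h

lemma eventually_le_ncard_gcd_eq_one (hn : 2 ≤ Fintype.card ι) (hs : Bornology.IsBounded s)
    (hm : MeasurableSet s) (hf : volume (frontier s) = 0) (hs0 : 0 ∉ s)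
    (hv : 0 < volume.real s) :
    ∀ᶠ N : ℕ in atTop, (N : ℝ) ^ Fintype.card ι * (volume.real s / 4) ≤
      {z | z ∈ scaledPts s N ∧ Finset.univ.gcd z = 1}.ncard := by
  obtain ⟨ρ, hρ0, hρ⟩ := hs.exists_pos_norm_le
  have hsρ : ∀ x ∈ s, ∀ i, |x i| ≤ ρ := fun x hx i => (norm_le_pi_norm x i).trans (hρ x hx)
  have hmult := (tendsto_tsum_ncard_scaledPts hn hs hm hf hsρ hρ0.le hs0).eventually_lt_const
    (u := 17 / 24 * volume.real s) (by linarith [tsum_div_add_two_pow_le hv.le hn])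
  have hall := (tendsto_ncard_scaledPts_div hs hm hf one_pos).eventually_const_lt
    (u := 23 / 24 * volume.real s) (by rw [one_pow, div_one]; linarith)
  filter_upwards [hmult, hall, eventually_ne_atTop 0] with N hmult hall hN
  have hpow : (0 : ℝ) < (N : ℝ) ^ Fintype.card ι := by positivity
  rw [tsum_div_const, div_lt_iff₀ hpow] at hmult
  rw [div_one, lt_div_iff₀ hpow] at hall
  have hsplit := ncard_scaledPts_le_ncard_gcd_eq_one_add hn hsρ hρ0.le hs0 hN
  linarith

end LatticePoints

section Limit

open scoped ENNReal NNReal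
open Finset

variable {ι : Type*} {m p : ℕ}

lemma intCast_injOn {B : ℤ} (hB : 2 * B < p) {S : Set (ι → ℤ)}
    (hS : ∀ x ∈ S, ∀ i, |x i| ≤ B) : S.InjOn fun x i => (x i : ZMod p) := by
  refine fun x hx y hy hxy => funext fun i => sub_eq_zero.1 ?_
  have hmod : ((x i - y i : ℤ) : ZMod p) = 0 := by
    rw [Int.cast_sub, sub_eq_zero]
    exact congrFun hxy i
  refine Int.eq_zero_of_abs_lt_dvd ((ZMod.intCast_zmod_eq_zero_iff_dvd _ p).1 hmod) ?_
  linarith [abs_sub (x i) (y i), hS x hx i, hS y hy i]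

variable [Fintype ι]

lemma intCast_ne_zero_of_gcd_eq_one (hp : p ≠ 1) {x : ι → ℤ} (hx : univ.gcd x = 1) :
    (fun i => (x i : ZMod p)) ≠ 0 := fun h0 => by
  have hdvd : (p : ℤ) ∣ univ.gcd x :=
    dvd_gcd fun i _ => (ZMod.intCast_zmod_eq_zero_iff_dvd _ p).1 (congrFun h0 i)
  exact hp (by exact_mod_cast Int.eq_one_of_dvd_one (Nat.cast_nonneg p) (hx ▸ hdvd))

lemma linearIndependent_intCast_pair [Fact p.Prime] {B : ℤ} (hB : 2 * B ^ 2 < p) {x y : ι → ℤ}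
    (hxB : ∀ i, |x i| ≤ B) (hyB : ∀ i, |y i| ≤ B) (hx : univ.gcd x = 1) (hy : univ.gcd y = 1)
    (hne : y ≠ x) (hne_neg : y ≠ -x) :
    LinearIndependent (ZMod p) ![fun i => (x i : ZMod p), fun i => (y i : ZMod p)] := by
  rw [LinearIndependent.pair_iff'
    (intCast_ne_zero_of_gcd_eq_one (Fact.out : p.Prime).ne_one hx)]
  intro a ha
  have hxy : ∀ i j, x i * y j = x j * y i := fun i j => by
    have hy_eq : ∀ k, (y k : ZMod p) = a * x k := fun k => (congrFun ha k).symm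
    have hmod : ((x i * y j - x j * y i : ℤ) : ZMod p) = 0 := by
      push_cast
      rw [hy_eq, hy_eq]
      ring
    refine sub_eq_zero.1 (Int.eq_zero_of_abs_lt_dvd
      ((ZMod.intCast_zmod_eq_zero_iff_dvd _ p).1 hmod) (lt_of_le_of_lt ?_ hB))
    have hmul : ∀ k l, |x k * y l| ≤ B ^ 2 := fun k l => by
      rw [abs_mul, sq]
      exact mul_le_mul (hxB k) (hyB l) (abs_nonneg _) ((abs_nonneg _).trans (hxB k))
    linarith [abs_sub (x i * y j) (x j * y i), hmul i j, hmul j i]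
  exact (eq_or_eq_neg_of_gcd_eq_one hx hy hxy).elim hne hne_neg

open Classical in
lemma card_avoidsMod_mul_card_le [DecidableEq ι] [Fact p.Prime] {N : ℕ} {B : ℤ}
    (hB : 2 * B ^ 2 < p) {A : Set (ι → ℝ)} {g : Matrix ι ι ℝ} (S : Finset (ι → ℤ))
    (hSB : ∀ x ∈ S, ∀ i, |x i| ≤ B) (hS : ∀ x ∈ S, univ.gcd x = 1)
    (hSA : ∀ x ∈ S, (N : ℝ)⁻¹ • (g *ᵥ fun i => (x i : ℝ)) ∈ A) :
    #{ξ : ι → ZMod p | AvoidsMod A N g ξ} * #S ≤ 2 * p * p ^ Fintype.card ι := by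
  set r : (ι → ℤ) → ι → ZMod p := fun x i => (x i : ZMod p)
  have hr : ∀ x ∈ S, r x ≠ 0 := fun x hx =>
    intCast_ne_zero_of_gcd_eq_one (Fact.out : p.Prime).ne_one (hS x hx)
  have hinj : Set.InjOn r S := intCast_injOn (by nlinarith [sq_nonneg (B - 1)]) hSB
  have hpair : ∀ X ∈ S.image r, ∃ T : Finset (ι → ZMod p), #T ≤ 2 ∧
      ∀ Y ∈ S.image r, Y ∉ T → LinearIndependent (ZMod p) ![X, Y] := by
    simp only [forall_mem_image]
    refine fun x hx => ⟨{r x, r (-x)}, card_le_two, fun y hy hyT => ?_⟩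
    simp only [Finset.mem_insert, Finset.mem_singleton, not_or] at hyT
    exact linearIndependent_intCast_pair hB (hSB x hx) (hSB y hy) (hS x hx) (hS y hy)
      (fun h => hyT.1 (congrArg r h)) fun h => hyT.2 (congrArg r h)
  have h := card_forall_dotProduct_ne_zero_mul_card_le (S.image r)
    (by simpa only [forall_mem_image] using hr) hpair
  rw [card_image_of_injOn hinj, ZMod.card] at h
  refine le_trans (Nat.mul_le_mul_right _ (card_le_card fun ξ hξ => ?_)) h
  rw [mem_filter_univ] at hξ ⊢
  simp only [forall_mem_image]
  intro x hx h0
  have hx0 : x ≠ 0 := by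
    rintro rfl
    exact hr 0 hx (by ext; simp [r])
  exact hξ x hx0 h0 (hSA x hx)

lemma exists_bounded_open_subset_lt_volume {A : Set (ι → ℝ)} (hA : IsOpen A) {α : ℝ}
    (hα : 0 ≤ α) (hvol : ENNReal.ofReal α < volume A) :
    ∃ s ⊆ A, IsOpen s ∧ Bornology.IsBounded s ∧ volume (frontier s) = 0 ∧
      α < volume.real s := by
  obtain ⟨K, hKA, hK, hαK⟩ := hA.exists_lt_isCompact hvol
  obtain ⟨r₀, hr₀, hrA⟩ := hK.exists_thickening_subset_open hA hKA
  obtain ⟨r, ⟨hr, hrr⟩, hfr⟩ := exists_null_frontier_thickening (volume : Measure (ι → ℝ)) K hr₀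
  have hbdd : Bornology.IsBounded (Metric.thickening r K) := hK.isBounded.thickening
  refine ⟨Metric.thickening r K, (Metric.thickening_mono hrr.le K).trans hrA,
    Metric.isOpen_thickening, hbdd, hfr, ?_⟩
  rw [measureReal_def, ← ENNReal.ofReal_lt_iff_lt_toReal hα hbdd.measure_lt_top.ne]
  exact hαK.trans_le (measure_mono (Metric.self_subset_thickening hr K))

variable [DecidableEq ι]

open Classical in
lemma avoidRatio_eq_ofReal [NeZero p] (N : ℕ) (A : Set (ι → ℝ)) (g : Matrix ι ι ℝ) :
    avoidRatio p N A g =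
      ENNReal.ofReal (#{ξ : ι → ZMod p | AvoidsMod A N g ξ} / (p : ℝ) ^ Fintype.card ι) := by
  have hp : (0 : ℝ) < p := Nat.cast_pos.2 (NeZero.pos p)
  rw [ENNReal.ofReal_div_of_pos (by positivity), ENNReal.ofReal_natCast,
    ENNReal.ofReal_pow hp.le, ENNReal.ofReal_natCast, avoidRatio]

lemma exists_bounded_mulVec_mem_lt_volume {A : Set (ι → ℝ)} (hA : IsOpen A) {α : ℝ} (hα : 0 ≤ α)
    (hvol : ENNReal.ofReal α < volume A) {g : Matrix ι ι ℝ} (hg : g.det ≠ 0) :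
    ∃ s : Set (ι → ℝ), (∀ x ∈ s, g *ᵥ x ∈ A) ∧ IsOpen s ∧ Bornology.IsBounded s ∧
      volume (frontier s) = 0 ∧ α / |g.det| < volume.real s := by
  have hdet : LinearMap.det (Matrix.toLin' g) ≠ 0 := by rwa [LinearMap.det_toLin']
  refine exists_bounded_open_subset_lt_volume
    (hA.preimage (LinearMap.continuous_of_finiteDimensional (Matrix.toLin' g)))
    (div_nonneg hα (abs_nonneg _)) ?_
  rw [Measure.addHaar_preimage_linearMap _ hdet, LinearMap.det_toLin', abs_inv, div_eq_inv_mul,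
    ENNReal.ofReal_mul (by positivity)]
  exact ENNReal.mul_lt_mul_right (by simpa using hg) ENNReal.ofReal_ne_top hvol

lemma card_avoidsMod_div_le {c S N P v : ℝ} (hv : 0 < v) (hP : 0 < P) (hN : 0 < N)
    (hS : N * (v / 4) ≤ S) (hp : p ≤ 2 * N) (hc : 0 ≤ c) (h : c * S ≤ 2 * p * P) :
    c / P ≤ 16 / v := by
  rw [div_le_div_iff₀ hP hv]
  refine le_of_mul_le_mul_left ?_ hN
  calc N * (c * v) = 4 * (c * (N * (v / 4))) := by ring
    _ ≤ 4 * (2 * (2 * N) * P) := by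
        gcongr 4 * ?_
        exact (mul_le_mul_of_nonneg_left hS hc).trans (h.trans (by gcongr))
    _ = N * (16 * P) := by ring

lemma avoidRatio_le_of_le_ncard [Fact p.Prime] {N b : ℕ} (hN : 0 < N)
    (hbp : 2 * (b * N) ^ 2 < p) (hpN : p ≤ 2 * N ^ Fintype.card ι) {A s : Set (ι → ℝ)}
    {g : Matrix ι ι ℝ} (hsA : ∀ x ∈ s, g *ᵥ x ∈ A) (hsb : ∀ x ∈ s, ∀ i, |x i| ≤ b) {v : ℝ}
    (hv : 0 < v) (hcard : (N : ℝ) ^ Fintype.card ι * (v / 4) ≤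
      {z | z ∈ scaledPts s N ∧ univ.gcd z = 1}.ncard) :
    avoidRatio p N A g ≤ ENNReal.ofReal (16 / v) := by
  classical
  have hN' : (0 : ℝ) < N := Nat.cast_pos.2 hN
  have hp : (0 : ℝ) < p := Nat.cast_pos.2 (Fact.out : p.Prime).pos
  have hfin : {z | z ∈ scaledPts s N ∧ univ.gcd z = 1}.Finite :=
    (finite_scaledPts hsb hN').subset fun z hz => hz.1
  rw [Set.ncard_eq_toFinset_card _ hfin] at hcard
  have hmul : (#{ξ : ι → ZMod p | AvoidsMod A N g ξ} : ℝ) * #hfin.toFinset ≤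
      2 * p * (p : ℝ) ^ Fintype.card ι := mod_cast
    card_avoidsMod_mul_card_le (B := b * N) (mod_cast hbp) hfin.toFinset
      (fun z hz i => mod_cast abs_le_of_mem_scaledPts hsb hN' (hfin.mem_toFinset.1 hz).1 i)
      (fun z hz => (hfin.mem_toFinset.1 hz).2)
      fun z hz => by
        rw [← mulVec_smul]
        exact hsA _ (hfin.mem_toFinset.1 hz).1
  rw [avoidRatio_eq_ofReal]
  exact ENNReal.ofReal_le_ofReal (card_avoidsMod_div_le hv (by positivity) (by positivity)
    hcard (mod_cast hpN) (Nat.cast_nonneg _) hmul)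

lemma eventually_avoidRatio_le (hn : 3 ≤ Fintype.card ι) {A : Set (ι → ℝ)} (hA : IsOpen A)
    (hA0 : 0 ∉ A) {α : ℝ} (hα : 0 < α) (hvol : ENNReal.ofReal α < volume A)
    {g : Matrix ι ι ℝ} (hg : g.det ≠ 0) :
    ∀ᶠ N : ℕ in atTop, ∀ (p : ℕ) [Fact p.Prime], N ^ Fintype.card ι ≤ p →
      p ≤ 2 * N ^ Fintype.card ι → avoidRatio p N A g ≤ ENNReal.ofReal (16 * |g.det| / α) := by
  obtain ⟨s, hsA, hso, hsb, hsf, hαs⟩ := exists_bounded_mulVec_mem_lt_volume hA hα.le hvol hg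
  have hs0 : (0 : ι → ℝ) ∉ s := fun h => hA0 (by simpa only [mulVec_zero] using hsA 0 h)
  have hgα : 0 < α / |g.det| := div_pos hα (abs_pos.2 hg)
  obtain ⟨ρ, hρ⟩ := hsb.exists_norm_le
  obtain ⟨b, hb⟩ := exists_nat_gt ρ
  have hsb' : ∀ x ∈ s, ∀ i, |x i| ≤ b := fun x hx i =>
    (norm_le_pi_norm x i).trans ((hρ x hx).trans hb.le)
  filter_upwards [eventually_le_ncard_gcd_eq_one (by omega) hsb hso.measurableSet hsf hs0
    (hgα.trans hαs), eventually_gt_atTop (2 * b ^ 2)] with N hN hbN p _ hNp hpN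
  have hN0 : 0 < N := by omega
  have hbp : 2 * (b * N) ^ 2 < p :=
    calc 2 * (b * N) ^ 2 = 2 * b ^ 2 * N ^ 2 := by ring
      _ < N * N ^ 2 := by gcongr
      _ = N ^ 3 := by ring
      _ ≤ p := (Nat.pow_le_pow_right hN0 hn).trans hNp
  rw [← div_div_eq_mul_div]
  exact avoidRatio_le_of_le_ncard hN0 hbp hpN hsA hsb' hgα (le_trans (by gcongr) hN)

lemma avoidRatio_le_one [NeZero p] (N : ℕ) (A : Set (ι → ℝ)) (g : Matrix ι ι ℝ) :
    avoidRatio p N A g ≤ 1 := by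
  classical
  refine ENNReal.div_le_of_le_mul ?_
  rw [one_mul]
  have h := card_filter_le (univ : Finset (ι → ZMod p)) fun ξ => AvoidsMod A N g ξ
  rw [card_univ, Fintype.card_fun, ZMod.card] at h
  exact_mod_cast h

lemma measurable_avoidRatio [NeZero p] (N : ℕ) {A : Set (ι → ℝ)} (hA : IsOpen A) :
    Measurable fun g : ι → ι → ℝ => avoidRatio p N A (Matrix.of g) := by
  classical
  refine Measurable.div_const ?_ _
  simp only [card_filter]
  push_cast
  exact Finset.measurable_fun_sum _ fun ξ _ => Measurable.ite
    (isClosed_setOf_avoidsMod hA N ξ).measurableSet measurable_const measurable_const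

lemma volume_setOf_inBox_lt_top {R : ℝ} (hR : 0 ≤ R) :
    volume {g : ι → ι → ℝ | InBox R (Matrix.of g)} < ⊤ :=
  (isBounded_iff_forall_norm_le.2 ⟨R, fun _ hg => (pi_norm_le_iff_of_nonneg hR).2 fun i =>
    (pi_norm_le_iff_of_nonneg hR).2 fun j => hg.1 i j⟩).measure_lt_top

lemma limsup_lintegral_avoidRatio_le (hn : 3 ≤ Fintype.card ι) {R : ℝ} (hR : 1 ≤ R)
    {q : ℕ → ℕ} (hprime : ∀ N, Fact (q N).Prime)
    (hq : ∀ᶠ N in atTop, N ^ Fintype.card ι ≤ q N ∧ q N ≤ 2 * N ^ Fintype.card ι)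
    {A : Set (ι → ℝ)} (hA : IsOpen A) (hA0 : 0 ∉ A) {α : ℝ} (hα : 0 < α)
    (hvol : ENNReal.ofReal α < volume A) :
    limsup (fun N => ∫⁻ g in {g : ι → ι → ℝ | InBox R (Matrix.of g)},
        avoidRatio (q N) N A (Matrix.of g)) atTop ≤
      ENNReal.ofReal (16 * ((Fintype.card ι).factorial * R ^ Fintype.card ι) / α) *
        volume {g : ι → ι → ℝ | InBox R (Matrix.of g)} := by
  set K := {g : ι → ι → ℝ | InBox R (Matrix.of g)}
  refine (limsup_lintegral_le (fun _ => 1) (fun N => measurable_avoidRatio N hA)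
    (fun N => ae_of_all _ fun g => avoidRatio_le_one N A _) ?_).trans ?_
  · rw [lintegral_one, Measure.restrict_apply_univ]
    exact (volume_setOf_inBox_lt_top (by linarith)).ne
  rw [← setLIntegral_const]
  refine setLIntegral_mono' (isClosed_setOf_inBox R).measurableSet fun g hg =>
    limsup_le_of_le (by isBoundedDefault) ?_
  filter_upwards [eventually_avoidRatio_le hn hA hA0 hα hvol (hg.det_ne_zero (by linarith)), hq]
    with N hN hqN
  refine (hN (q N) hqN.1 hqN.2).trans ?_
  gcongr
  exact abs_det_le hg.1

lemma exists_seq_prime_le_two_mul_pow (k : ℕ) :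
    ∃ q : ℕ → ℕ, (∀ N, (q N).Prime) ∧ ∀ N, N ≠ 0 → N ^ k ≤ q N ∧ q N ≤ 2 * N ^ k := by
  have h : ∀ N : ℕ, ∃ p : ℕ, p.Prime ∧ (N ≠ 0 → N ^ k ≤ p ∧ p ≤ 2 * N ^ k) := fun N => by
    rcases eq_or_ne N 0 with rfl | hN
    · exact ⟨2, Nat.prime_two, fun h => (h rfl).elim⟩
    · obtain ⟨p, hp, hlt, hle⟩ := Nat.exists_prime_lt_and_le_two_mul (N ^ k) (pow_ne_zero k hN)
      exact ⟨p, hp, fun _ => ⟨hlt.le, hle⟩⟩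
  choose q hq hqN using h
  exact ⟨q, hq, hqN⟩

lemma exists_forall_volume_avoids_le (hm : 2 ≤ m) {R : ℝ} (hR : 1 ≤ R) :
    ∃ C : ℝ≥0, ∀ A : Set (Fin (m + 1) → ℝ), IsOpen A → 0 ∉ A → ∀ α : ℝ, 0 < α →
      ENNReal.ofReal α < volume A → volume {h : Fin (m + 1) → Fin (m + 1) → ℝ |
        InBox R (Matrix.of h) ∧ Avoids A (Matrix.of h)} ≤ C / ENNReal.ofReal α := by
  obtain ⟨R', C, D, hR', hC⟩ := exists_volume_avoids_le_lintegral_avoidRatio m hR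
  obtain ⟨q, hq, hqN⟩ := exists_seq_prime_le_two_mul_pow (m + 1)
  have hprime : ∀ N, Fact (q N).Prime := fun N => ⟨hq N⟩
  set K' := {g : Fin (m + 1) → Fin (m + 1) → ℝ | InBox R' (Matrix.of g)}
  set Δ : ℝ := 16 * ((m + 1).factorial * R' ^ (m + 1))
  refine ⟨C * (Δ.toNNReal * (volume K').toNNReal), fun A hA hA0 α hα hvol => ?_⟩
  set V := volume {h : Fin (m + 1) → Fin (m + 1) → ℝ |
    InBox R (Matrix.of h) ∧ Avoids A (Matrix.of h)}
  have hev : ∀ᶠ N : ℕ in atTop, V ≤ C * ∫⁻ g in K', avoidRatio (q N) N A (Matrix.of g) := by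
    filter_upwards [eventually_gt_atTop D] with N hN
    have hN0 : N ≠ 0 := by omega
    exact hC N (q N) hN0 (hqN N hN0).1 (hqN N hN0).2
      (hN.trans_le ((Nat.le_self_pow (by omega) N).trans (hqN N hN0).1)) A hA
  calc V ≤ limsup (fun N => C * ∫⁻ g in K', avoidRatio (q N) N A (Matrix.of g)) atTop :=
        le_limsup_of_frequently_le hev.frequently (by isBoundedDefault)
    _ = C * limsup (fun N => ∫⁻ g in K', avoidRatio (q N) N A (Matrix.of g)) atTop :=
        ENNReal.limsup_const_mul_of_ne_top (ENNReal.natCast_ne_top _)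
    _ ≤ C * (ENNReal.ofReal (Δ / α) * volume K') := by
        gcongr
        simpa only [Fintype.card_fin] using limsup_lintegral_avoidRatio_le
          (by simpa using hm) hR' hprime
          (by filter_upwards [eventually_ne_atTop 0] with N hN; simpa using hqN N hN)
          hA hA0 hα hvol
    _ = _ := by
        rw [ENNReal.ofReal_div_of_pos hα]
        push_cast
        rw [ENNReal.coe_toNNReal (volume_setOf_inBox_lt_top (by linarith)).ne, ← ENNReal.ofReal]
        simp only [div_eq_mul_inv]
        ring

theorem exists_volume_avoids_mul_volume_le (hm : 2 ≤ m) {R : ℝ} (hR : 1 ≤ R) :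
    ∃ C : ℝ≥0, ∀ A : Set (Fin (m + 1) → ℝ), IsOpen A → 0 ∉ A →
      volume {h : Fin (m + 1) → Fin (m + 1) → ℝ |
        InBox R (Matrix.of h) ∧ Avoids A (Matrix.of h)} * volume A ≤ C := by
  obtain ⟨C, hC⟩ := exists_forall_volume_avoids_le hm hR
  refine ⟨C, fun A hA hA0 => ENNReal.mul_le_of_forall_lt fun v hv a ha => ?_⟩
  rcases eq_or_ne a 0 with rfl | ha0
  · simp
  have ha_eq : ENNReal.ofReal a.toReal = a := ENNReal.ofReal_toReal ha.ne_top
  have h := hC A hA hA0 a.toReal (ENNReal.toReal_pos ha0 ha.ne_top) (by rwa [ha_eq])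
  rw [ha_eq] at h
  exact ENNReal.mul_le_of_le_div (hv.le.trans h)

end Limit

section Orbit

open scoped ENNReal NNReal Pointwise

variable {n m : ℕ}

lemma Qform_smul (M : Matrix (Fin n) (Fin n) ℝ) (t : ℝ) (v : Fin n → ℝ) :
    Qform M (t • v) = t ^ 2 * Qform M v := by
  rw [Qform, Qform, mulVec_smul, smul_dotProduct, dotProduct_smul, smul_eq_mul, smul_eq_mul, sq,
    mul_assoc]

lemma euclNorm_smul {t : ℝ} (ht : 0 ≤ t) (v : Fin n → ℝ) : euclNorm (t • v) = t * euclNorm v := by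
  simp only [euclNorm, Pi.smul_apply, smul_eq_mul, mul_pow]
  rw [← Finset.mul_sum, Real.sqrt_mul (sq_nonneg t), Real.sqrt_sq ht]

lemma continuous_Qform (M : Matrix (Fin n) (Fin n) ℝ) : Continuous (Qform M) := by
  unfold Qform dotProduct mulVec dotProduct
  fun_prop

lemma continuous_euclNorm : Continuous (euclNorm : (Fin n → ℝ) → ℝ) := by
  unfold euclNorm
  fun_prop

/-- The vectors of Euclidean length less than `r` at which the form of `M` takes a value in
`(0, e)`: the targets that a random lattice has to hit. -/
def smallValueSet (M : Matrix (Fin n) (Fin n) ℝ) (e r : ℝ) : Set (Fin n → ℝ) :=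
  {v | 0 < Qform M v ∧ Qform M v < e ∧ euclNorm v < r}

lemma isOpen_smallValueSet (M : Matrix (Fin n) (Fin n) ℝ) (e r : ℝ) :
    IsOpen (smallValueSet M e r) :=
  (isOpen_lt continuous_const (continuous_Qform M)).inter
    ((isOpen_lt (continuous_Qform M) continuous_const).inter
      (isOpen_lt continuous_euclNorm continuous_const))

lemma zero_notMem_smallValueSet (M : Matrix (Fin n) (Fin n) ℝ) (e r : ℝ) :
    (0 : Fin n → ℝ) ∉ smallValueSet M e r := fun h => by
  simpa only [Qform, zero_dotProduct, lt_self_iff_false] using h.1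

lemma smallValueSet_mono (M : Matrix (Fin n) (Fin n) ℝ) {e e' r r' : ℝ} (he : e ≤ e')
    (hr : r ≤ r') : smallValueSet M e r ⊆ smallValueSet M e' r' :=
  fun _ hv => ⟨hv.1, hv.2.1.trans_le he, hv.2.2.trans_le hr⟩

lemma smul_mem_smallValueSet_iff {M : Matrix (Fin n) (Fin n) ℝ} {e r t : ℝ} (ht : 0 < t)
    {v : Fin n → ℝ} :
    t • v ∈ smallValueSet M (t ^ 2 * e) (t * r) ↔ v ∈ smallValueSet M e r := by
  have ht2 : 0 < t ^ 2 := pow_pos ht 2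
  simp only [smallValueSet, Set.mem_ofPred_eq, Qform_smul, euclNorm_smul ht.le,
    mul_lt_mul_iff_right₀ ht, mul_lt_mul_iff_right₀ ht2, mul_pos_iff_of_pos_left ht2]

lemma volume_smallValueSet_smul (M : Matrix (Fin n) (Fin n) ℝ) (e r : ℝ) {t : ℝ} (ht : 0 < t) :
    volume (smallValueSet M (t ^ 2 * e) (t * r)) =
      ENNReal.ofReal (t ^ n) * volume (smallValueSet M e r) := by
  have hset : smallValueSet M (t ^ 2 * e) (t * r) = t • smallValueSet M e r := by
    ext v
    rw [Set.mem_smul_set_iff_inv_smul_mem₀ ht.ne', ← smul_mem_smallValueSet_iff (v := t⁻¹ • v) ht,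
      smul_inv_smul₀ ht.ne']
  rw [hset, Measure.addHaar_smul_of_nonneg _ ht.le, Module.finrank_fin_fun]

lemma eventually_lt_volume_smallValueSet_one {M : Matrix (Fin n) (Fin n) ℝ} {c₀ : ℝ} (hc₀ : 0 < c₀)
    (hvol : volumeAsymp M c₀) :
    ∀ᶠ r in atTop,
      ENNReal.ofReal (c₀ / 4 * (r / 2) ^ (n - 2)) < volume (smallValueSet M 1 r) := by
  have h := (hvol 0 1 one_pos).def (half_pos hc₀)
  filter_upwards [(tendsto_id.atTop_div_const two_pos).eventually h, eventually_gt_atTop 0]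
    with r hr hr0
  set B := {x : Fin n → ℝ | Qform M x ∈ Set.Ioo 0 1 ∧ euclNorm x ≤ r / 2}
  have hrn : 0 < (r / 2) ^ (n - 2) := by positivity
  have hB : c₀ / 4 * (r / 2) ^ (n - 2) < (volume B).toReal := by
    rw [id, Real.norm_of_nonneg hrn.le, Real.norm_eq_abs] at hr
    nlinarith [(abs_le.1 hr).1]
  calc ENNReal.ofReal (c₀ / 4 * (r / 2) ^ (n - 2)) < ENNReal.ofReal (volume B).toReal :=
        (ENNReal.ofReal_lt_ofReal_iff_of_nonneg (by positivity)).2 hB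
    _ ≤ volume B := ENNReal.ofReal_toReal_le
    _ ≤ volume (smallValueSet M 1 r) :=
        measure_mono fun x hx => ⟨hx.1.1, hx.1.2, hx.2.trans_lt (half_lt_self hr0)⟩

lemma exists_pow_lt_volume_smallValueSet (hn : 2 ≤ n) {M : Matrix (Fin n) (Fin n) ℝ} {c₀ : ℝ}
    (hc₀ : 0 < c₀) (hvol : volumeAsymp M c₀) {b : ℝ} (hb : 1 < b) :
    ∃ c : ℝ, 0 < c ∧ ∀ᶠ k : ℕ in atTop, ENNReal.ofReal (c * (b ^ (n - 2) / 2) ^ k) <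
      volume (smallValueSet M ((1 / 2) ^ k) (b ^ k)) := by
  set s : ℝ := √(1 / 2)
  have hs0 : 0 < s := by positivity
  have hs2 : s ^ 2 = 1 / 2 := Real.sq_sqrt (by norm_num)
  have hbs : 1 < b / s := by
    rw [one_lt_div hs0]
    nlinarith
  refine ⟨c₀ / 4 * (1 / 2) ^ (n - 2), by positivity, ?_⟩
  filter_upwards [(tendsto_pow_atTop_atTop_of_one_lt hbs).eventually
    (eventually_lt_volume_smallValueSet_one hc₀ hvol)] with k hk
  have hpow : s ^ n * (b / s) ^ (n - 2) = b ^ (n - 2) / 2 := by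
    obtain ⟨j, rfl⟩ := Nat.exists_eq_add_of_le' hn
    rw [Nat.add_sub_cancel, pow_add, hs2, div_pow]
    field_simp
  calc ENNReal.ofReal (c₀ / 4 * (1 / 2) ^ (n - 2) * (b ^ (n - 2) / 2) ^ k)
      = ENNReal.ofReal ((s ^ k) ^ n) *
          ENNReal.ofReal (c₀ / 4 * ((b / s) ^ k / 2) ^ (n - 2)) := by
        rw [← hpow, ← ENNReal.ofReal_mul (by positivity)]
        ring_nf
    _ < ENNReal.ofReal ((s ^ k) ^ n) * volume (smallValueSet M 1 ((b / s) ^ k)) :=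
        ENNReal.mul_lt_mul_right (ENNReal.ofReal_pos.2 (by positivity)).ne'
          ENNReal.ofReal_ne_top hk
    _ = volume (smallValueSet M ((1 / 2) ^ k) (b ^ k)) := by
        rw [← volume_smallValueSet_smul M _ _ (pow_pos hs0 k), mul_one, ← mul_pow,
          mul_div_cancel₀ _ hs0.ne', ← pow_mul, mul_comm k, pow_mul, hs2]

lemma exists_nat_inBox {ι : Type*} [Fintype ι] [DecidableEq ι] {h : Matrix ι ι ℝ}
    (hdet : h.det ≠ 0) : ∃ R : ℕ, InBox (R + 1) h := by
  obtain ⟨a, ha⟩ := (Set.finite_range fun p : ι × ι => |h p.1 p.2|).bddAbove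
  obtain ⟨R, hR⟩ := exists_nat_gt (max a |h.det|⁻¹)
  rw [max_lt_iff] at hR
  refine ⟨R, fun i j => (ha ⟨(i, j), rfl⟩).trans (by linarith), ?_⟩
  rw [inv_le_comm₀ (by positivity) (abs_pos.2 hdet)]
  linarith

theorem ae_eventually_not_avoids (hm : 2 ≤ m) {A : ℕ → Set (Fin (m + 1) → ℝ)}
    (hA : ∀ k, IsOpen (A k)) (hA0 : ∀ k, 0 ∉ A k) (hsum : ∑' k, (volume (A k))⁻¹ ≠ ⊤) :
    ∀ᵐ h : Fin (m + 1) → Fin (m + 1) → ℝ, (Matrix.of h).det ≠ 0 →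
      ∀ᶠ k in atTop, ¬ Avoids (A k) (Matrix.of h) := by
  have hbox : ∀ R : ℕ, ∀ᵐ h : Fin (m + 1) → Fin (m + 1) → ℝ,
      ∀ᶠ k in atTop, ¬ (InBox (R + 1) (Matrix.of h) ∧ Avoids (A k) (Matrix.of h)) := fun R => by
    obtain ⟨C, hC⟩ := exists_volume_avoids_mul_volume_le hm (R := R + 1) (by simp)
    refine ae_eventually_notMem (s := fun k => {h : Fin (m + 1) → Fin (m + 1) → ℝ |
      InBox (R + 1) (Matrix.of h) ∧ Avoids (A k) (Matrix.of h)}) <|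
      ne_top_of_le_ne_top (b := C * ∑' k, (volume (A k))⁻¹)
        (ENNReal.mul_ne_top ENNReal.coe_ne_top hsum) ?_
    rw [← ENNReal.tsum_mul_left]
    refine ENNReal.tsum_le_tsum fun k => ?_
    have hpos : volume (A k) ≠ 0 := fun h0 => ENNReal.ne_top_of_tsum_ne_top hsum k (by simp [h0])
    exact (ENNReal.le_div_iff_mul_le (.inl hpos) (.inr ENNReal.coe_ne_top)).2
      (hC (A k) (hA k) (hA0 k))
  filter_upwards [ae_all_iff.2 hbox] with h hh hdet
  obtain ⟨R, hR⟩ := exists_nat_inBox hdet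
  exact (hh R).mono fun k hk hav => hk ⟨hR, hav⟩

lemma tsum_inv_ofReal_geometric_ne_top {c θ : ℝ} (hc : 0 < c) (hθ : 1 < θ) :
    ∑' k : ℕ, (ENNReal.ofReal (c * θ ^ k))⁻¹ ≠ ⊤ := by
  have hsum : Summable fun k : ℕ => c⁻¹ * θ⁻¹ ^ k :=
    (summable_geometric_of_lt_one (by positivity) (inv_lt_one_of_one_lt₀ hθ)).mul_left _
  convert hsum.tsum_ofReal_ne_top using 3 with k
  rw [← ENNReal.ofReal_inv_of_pos (by positivity), mul_inv, inv_pow]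

/-- The lattice `h ℤⁿ` contains nonzero vectors of length `O(2 ^ (β k))` at which the form takes a
value in `(0, O(2 ^ (-k)))`, for every large `k`. The implied constant makes the property invariant
under positive scaling of `h`. -/
def IsApproximable (M : Matrix (Fin n) (Fin n) ℝ) (β : ℝ) (h : Matrix (Fin n) (Fin n) ℝ) : Prop :=
  ∃ C k₀ : ℕ, ∀ k, k₀ ≤ k → ∃ x : Fin n → ℤ, x ≠ 0 ∧
    h *ᵥ (fun i => (x i : ℝ)) ∈ smallValueSet M (C * (1 / 2) ^ k) (C * ((2 : ℝ) ^ β) ^ k)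

theorem ae_isApproximable (hm : 2 ≤ m) {M : Matrix (Fin (m + 1)) (Fin (m + 1)) ℝ} {c₀ : ℝ}
    (hc₀ : 0 < c₀) (hvol : volumeAsymp M c₀) {β : ℝ} (hβ : 1 < β * (m - 1)) :
    ∀ᵐ h : Fin (m + 1) → Fin (m + 1) → ℝ, (Matrix.of h).det ≠ 0 →
      IsApproximable M β (Matrix.of h) := by
  have hm' : (2 : ℝ) ≤ m := mod_cast hm
  have hβ0 : 0 < β := pos_of_mul_pos_left (one_pos.trans hβ) (by linarith)
  set b : ℝ := 2 ^ β
  have hθ : 1 < b ^ (m + 1 - 2) / 2 := by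
    rw [one_lt_div two_pos, ← Real.rpow_mul_natCast two_pos.le, Nat.add_sub_add_right m 1 1,
      Nat.cast_sub (by omega), Nat.cast_one]
    exact Real.self_lt_rpow_of_one_lt one_lt_two hβ
  obtain ⟨c, hc, hev⟩ := exists_pow_lt_volume_smallValueSet (by omega) hc₀ hvol
    (Real.one_lt_rpow one_lt_two hβ0)
  obtain ⟨k₁, hk₁⟩ := eventually_atTop.1 hev
  have hsum : ∑' k, (volume (smallValueSet M ((1 / 2) ^ (k + k₁)) (b ^ (k + k₁))))⁻¹ ≠ ⊤ := by
    refine ne_top_of_le_ne_top (tsum_inv_ofReal_geometric_ne_top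
      (c := c * (b ^ (m + 1 - 2) / 2) ^ k₁) (by positivity) hθ)
      (ENNReal.tsum_le_tsum fun k => ENNReal.inv_le_inv.2 ?_)
    rw [mul_assoc, ← pow_add, add_comm k₁]
    exact (hk₁ _ (Nat.le_add_left _ _)).le
  filter_upwards [ae_eventually_not_avoids hm (fun k => isOpen_smallValueSet M _ _)
    (fun k => zero_notMem_smallValueSet M _ _) hsum] with h hh hdet
  obtain ⟨k₂, hk₂⟩ := eventually_atTop.1 (hh hdet)
  refine ⟨1, k₂ + k₁, fun k hk => ?_⟩
  have hav := hk₂ (k - k₁) (by omega)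
  rw [Nat.sub_add_cancel (by omega), Avoids] at hav
  push Not at hav
  simpa only [Nat.cast_one, one_mul] using hav

lemma IsApproximable.smul {M : Matrix (Fin n) (Fin n) ℝ} {β : ℝ} {h : Matrix (Fin n) (Fin n) ℝ}
    (hh : IsApproximable M β h) {t : ℝ} (ht : 0 < t) : IsApproximable M β (t • h) := by
  obtain ⟨C, k₀, hC⟩ := hh
  obtain ⟨D, hD⟩ := exists_nat_gt (max t (t ^ 2))
  rw [max_lt_iff] at hD
  refine ⟨D * C, k₀, fun k hk => ?_⟩
  obtain ⟨x, hx, hmem⟩ := hC k hk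
  refine ⟨x, hx, ?_⟩
  rw [smul_mulVec]
  refine smallValueSet_mono M ?_ ?_ ((smul_mem_smallValueSet_iff ht).2 hmem)
  · rw [Nat.cast_mul, mul_assoc]
    exact mul_le_mul_of_nonneg_right hD.2.le (by positivity)
  · rw [Nat.cast_mul, mul_assoc]
    exact mul_le_mul_of_nonneg_right hD.1.le (by positivity)

lemma measurableSet_isApproximable (M : Matrix (Fin n) (Fin n) ℝ) (β : ℝ) :
    MeasurableSet {h : Fin n → Fin n → ℝ | IsApproximable M β (Matrix.of h)} := by
  refine measurableSet_setOfPred.2 <| Measurable.exists fun C => Measurable.exists fun k₀ =>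
    Measurable.forall fun k => Measurable.imp measurable_const <| Measurable.exists fun x =>
      Measurable.and measurable_const ?_
  have hcont : Continuous fun h : Fin n → Fin n → ℝ => Matrix.of h *ᵥ fun i => (x i : ℝ) :=
    continuous_id.matrix_mulVec continuous_const
  exact measurableSet_setOfPred.1
    (hcont.isOpen_preimage _ (isOpen_smallValueSet M _ _)).measurableSet

lemma exists_nat_mul_half_pow_lt {c ε : ℝ} {k₀ : ℕ} (hc : 0 < c) (hε : 0 < ε)
    (hεc : ε ≤ c * (1 / 2) ^ k₀) :
    ∃ k, k₀ ≤ k ∧ c * (1 / 2) ^ k < ε ∧ 2 ^ k ≤ 2 * c / ε := by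
  have hcε : 1 ≤ c / ε := by
    rw [one_le_div hε]
    exact hεc.trans (mul_le_of_le_one_right hc.le (pow_le_one₀ (by norm_num) (by norm_num)))
  obtain ⟨k, hk, hk'⟩ := exists_nat_pow_near hcε (one_lt_two : (1 : ℝ) < 2)
  have hlt : c * (1 / 2) ^ (k + 1) < ε := by
    rw [div_lt_iff₀ hε] at hk'
    rw [_root_.one_div_pow, mul_one_div, div_lt_iff₀ (by positivity)]
    linarith
  refine ⟨k + 1, ?_, hlt, ?_⟩
  · refine ((pow_lt_pow_iff_right_of_lt_one₀ (by norm_num) (by norm_num)).1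
      (lt_of_mul_lt_mul_left (hlt.trans_le hεc) hc.le)).le
  · rw [pow_succ', mul_div_assoc]
    exact mul_le_mul_of_nonneg_left hk two_pos.le

lemma mul_rpow_pow_le_rpow_neg {C β γ ε : ℝ} {k : ℕ} (hC : 0 < C) (hβ : 0 ≤ β) (hε : 0 < ε)
    (hk : 2 ^ k ≤ 2 * C / ε) (hCε : C * (2 * C) ^ β ≤ ε ^ (-(γ - β))) :
    C * ((2 : ℝ) ^ β) ^ k ≤ ε ^ (-γ) :=
  calc C * ((2 : ℝ) ^ β) ^ k ≤ C * (2 * C / ε) ^ β := by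
        rw [Real.rpow_pow_comm two_pos.le]
        gcongr
    _ = C * (2 * C) ^ β * ε ^ (-β) := by
        rw [Real.div_rpow (by positivity) hε.le, Real.rpow_neg hε.le, mul_assoc, div_eq_mul_inv]
    _ ≤ ε ^ (-(γ - β)) * ε ^ (-β) := by gcongr
    _ = ε ^ (-γ) := by
        rw [← Real.rpow_add hε]
        ring_nf

theorem IsApproximable.exists_small_values {M : Matrix (Fin n) (Fin n) ℝ} {β γ : ℝ} (hβ : 0 ≤ β)
    (hβγ : β < γ) {h : Matrix (Fin n) (Fin n) ℝ} (hh : IsApproximable M β h) :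
    ∃ ε₀ : ℝ, 0 < ε₀ ∧ ∀ ε : ℝ, 0 < ε → ε < ε₀ → ∃ x : Fin n → ℤ, x ≠ 0 ∧
      h *ᵥ (fun i => (x i : ℝ)) ∈ smallValueSet M ε (ε ^ (-γ)) := by
  obtain ⟨C, k₀, hC⟩ := hh
  have hC0 : (0 : ℝ) < C := by
    obtain ⟨x, -, hx⟩ := hC k₀ le_rfl
    exact pos_of_mul_pos_left (hx.1.trans hx.2.1) (by positivity)
  have hrpow : ∀ᶠ ε : ℝ in nhdsWithin 0 (Set.Ioi 0), C * (2 * C : ℝ) ^ β ≤ ε ^ (-(γ - β)) :=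
    (tendsto_rpow_neg_nhdsGT_zero (by linarith)).eventually_ge_atTop _
  have hhalf : ∀ᶠ ε : ℝ in nhdsWithin 0 (Set.Ioi 0), ε ≤ C * (1 / 2) ^ k₀ :=
    nhdsWithin_le_nhds (eventually_le_nhds (by positivity))
  obtain ⟨ε₀, hε₀, hsub⟩ := mem_nhdsGT_iff_exists_Ioo_subset.1 (hrpow.and hhalf)
  refine ⟨ε₀, hε₀, fun ε hε hεε₀ => ?_⟩
  obtain ⟨hCε, hεC⟩ := hsub ⟨hε, hεε₀⟩
  obtain ⟨k, hk₀, hkε, hk⟩ := exists_nat_mul_half_pow_lt hC0 hε hεC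
  obtain ⟨x, hx, hmem⟩ := hC k hk₀
  exact ⟨x, hx, smallValueSet_mono M hkε.le
    (mul_rpow_pow_le_rpow_neg hC0 hβ hε hk hCε) hmem⟩

end Orbit

section Haar

variable {n : ℕ}

instance (n : ℕ) : BorelSpace (SLR n) := ⟨rfl⟩

/-- The array of entries of a unimodular matrix. Arrays `Fin n → Fin n → ℝ`, unlike matrices, carry
Lebesgue measure. -/
def entries (g : SLR n) : Fin n → Fin n → ℝ := (g : Matrix (Fin n) (Fin n) ℝ)

lemma isClosedEmbedding_entries : Topology.IsClosedEmbedding (entries : SLR n → _) := by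
  refine ⟨⟨⟨rfl⟩, Subtype.val_injective⟩, ?_⟩
  have hrange : Set.range (entries : SLR n → _) =
      {h : Fin n → Fin n → ℝ | (Matrix.of h).det = 1} :=
    Set.ext fun h => ⟨fun ⟨g, hg⟩ => hg ▸ g.2, fun hh => ⟨⟨Matrix.of h, hh⟩, rfl⟩⟩
  rw [hrange]
  exact isClosed_eq (Continuous.matrix_det continuous_id) continuous_const

instance (n : ℕ) : SecondCountableTopology (SLR n) :=
  isClosedEmbedding_entries.isEmbedding.secondCountableTopology

instance (n : ℕ) : SigmaCompactSpace (SLR n) :=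
  isClosedEmbedding_entries.sigmaCompactSpace

instance (n : ℕ) : IsTopologicalGroup (SLR n) := Matrix.SpecialLinearGroup.topologicalGroup

/-- Left multiplication by a matrix, as a linear map on arrays; it is conjugate to right
multiplication by the transpose. -/
noncomputable def leftMul (F : Matrix (Fin n) (Fin n) ℝ) :
    (Fin n → Fin n → ℝ) →ₗ[ℝ] (Fin n → Fin n → ℝ) :=
  LinearEquiv.conj
    (ofLinearEquiv ℝ ≪≫ₗ transposeLinearEquiv (Fin n) (Fin n) ℝ ℝ ≪≫ₗ (ofLinearEquiv ℝ).symm)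
    (rightMul Fᵀ)

lemma of_leftMul (F : Matrix (Fin n) (Fin n) ℝ) (h : Fin n → Fin n → ℝ) :
    Matrix.of (leftMul F h) = F * Matrix.of h := by
  rw [← transpose_inj, transpose_mul]
  exact of_rightMul Fᵀ _

lemma volume_leftMul_preimage {F : Matrix (Fin n) (Fin n) ℝ} (hF : F.det = 1)
    (W : Set (Fin n → Fin n → ℝ)) : volume (leftMul F ⁻¹' W) = volume W := by
  have hdet : LinearMap.det (leftMul F) = 1 := by
    rw [leftMul, LinearEquiv.conj_apply, LinearMap.comp_assoc, LinearMap.det_conj, det_rightMul,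
      det_transpose, hF, one_pow]
  rw [Measure.addHaar_preimage_linearMap _ (hdet ▸ one_ne_zero), hdet, inv_one, abs_one,
    ENNReal.ofReal_one, one_mul]

/-- The arrays with positive determinant, that is, the cone over `SL(n, ℝ)`. -/
def posDet (n : ℕ) : Set (Fin n → Fin n → ℝ) := {h | 0 < (Matrix.of h).det}

lemma isOpen_posDet : IsOpen (posDet n) :=
  isOpen_lt continuous_const (Continuous.matrix_det continuous_id)

lemma leftMul_mem_posDet {g : SLR n} {h : Fin n → Fin n → ℝ} :
    leftMul (g : Matrix (Fin n) (Fin n) ℝ) h ∈ posDet n ↔ h ∈ posDet n := by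
  rw [posDet, Set.mem_ofPred_eq, Set.mem_ofPred_eq, of_leftMul, det_mul, g.2, one_mul]

variable [NeZero n]

open Classical in
/-- The unimodular matrix on the ray through an array of positive determinant, and the identity for
other arrays. -/
noncomputable def toUnimodular (h : Fin n → Fin n → ℝ) : SLR n :=
  if hh : 0 < (Matrix.of h).det then
    ⟨(Matrix.of h).det ^ (-(1 / (n : ℝ))) • Matrix.of h, by
      rw [det_smul, Fintype.card_fin, ← Real.rpow_mul_natCast hh.le, neg_mul,
        one_div_mul_cancel (NeZero.ne _), Real.rpow_neg_one, inv_mul_cancel₀ hh.ne']⟩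
  else 1

lemma coe_toUnimodular {h : Fin n → Fin n → ℝ} (hh : h ∈ posDet n) :
    (toUnimodular h : Matrix (Fin n) (Fin n) ℝ) =
      (Matrix.of h).det ^ (-(1 / (n : ℝ))) • Matrix.of h :=
  congrArg Subtype.val (dif_pos hh)

lemma measurable_toUnimodular : Measurable (toUnimodular : (Fin n → Fin n → ℝ) → SLR n) := by
  classical
  rw [← isClosedEmbedding_entries.measurableEmbedding.measurable_comp_iff]
  have heq : entries ∘ toUnimodular = fun h : Fin n → Fin n → ℝ =>
      if h ∈ posDet n then (Matrix.of h).det ^ (-(1 / (n : ℝ))) • h else entries 1 :=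
    funext fun h => by
      split_ifs with hh
      · exact coe_toUnimodular hh
      · exact congrArg entries (dif_neg hh)
  have hdet : Continuous fun h : Fin n → Fin n → ℝ => (Matrix.of h).det :=
    Continuous.matrix_det continuous_id
  rw [heq]
  exact ((hdet.measurable.pow_const _).smul measurable_id).ite isOpen_posDet.measurableSet
    measurable_const

lemma toUnimodular_leftMul (g : SLR n) {h : Fin n → Fin n → ℝ} (hh : h ∈ posDet n) :
    toUnimodular (leftMul (g : Matrix (Fin n) (Fin n) ℝ) h) = g * toUnimodular h := by
  refine Subtype.ext ?_
  rw [coe_toUnimodular (leftMul_mem_posDet.2 hh), Matrix.SpecialLinearGroup.coe_mul,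
    coe_toUnimodular hh, of_leftMul, det_mul, g.2, one_mul, Matrix.mul_smul]

/-- The measure on `SL(n, ℝ)` whose value on a set is the volume of the cone over it. It is left
invariant, and infinite on nonempty open sets: it only serves to detect Haar null sets. -/
noncomputable def coneMeasure (n : ℕ) [NeZero n] : Measure (SLR n) :=
  (volume.restrict (posDet n)).map toUnimodular

lemma coneMeasure_apply {s : Set (SLR n)} (hs : MeasurableSet s) :
    coneMeasure n s = volume (toUnimodular ⁻¹' s ∩ posDet n) := by
  rw [coneMeasure, Measure.map_apply measurable_toUnimodular hs,
    Measure.restrict_apply (measurable_toUnimodular hs)]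

instance : SFinite (coneMeasure n) := by
  unfold coneMeasure
  infer_instance

instance : (coneMeasure n).IsMulLeftInvariant where
  map_mul_left_eq_self g := by
    refine Measure.ext fun s hs => ?_
    have hg : Measurable fun x : SLR n => g * x := measurable_const_mul g
    rw [Measure.map_apply hg hs, coneMeasure_apply (hg hs), coneMeasure_apply hs,
      ← volume_leftMul_preimage g.2 (toUnimodular ⁻¹' s ∩ posDet n)]
    congr 1
    ext h
    simp only [Set.mem_inter_iff, Set.mem_preimage, leftMul_mem_posDet]
    exact and_congr_left fun hh => by rw [toUnimodular_leftMul g hh]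

lemma coneMeasure_ne_zero : coneMeasure n ≠ 0 := by
  have hone : entries (1 : SLR n) ∈ posDet n := one_pos.trans_eq (1 : SLR n).2.symm
  rw [ne_eq, ← Measure.measure_univ_eq_zero, coneMeasure_apply .univ, Set.preimage_univ,
    Set.univ_inter]
  exact (isOpen_posDet.measure_pos volume ⟨_, hone⟩).ne'

theorem ae_specialLinearGroup_of_ae (μ : Measure (SLR n)) [μ.IsHaarMeasure]
    {P : Matrix (Fin n) (Fin n) ℝ → Prop}
    (hP : MeasurableSet {h : Fin n → Fin n → ℝ | P (Matrix.of h)})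
    (hsmul : ∀ h, P h → ∀ t : ℝ, 0 < t → P (t • h))
    (hae : ∀ᵐ h : Fin n → Fin n → ℝ, (Matrix.of h).det ≠ 0 → P (Matrix.of h)) :
    ∀ᵐ g : SLR n ∂μ, P g := by
  have hmeas : MeasurableSet {g : SLR n | P g} :=
    isClosedEmbedding_entries.continuous.measurable hP
  have hcone : coneMeasure n {g : SLR n | P g}ᶜ = 0 := by
    rw [coneMeasure_apply hmeas.compl]
    refine measure_mono_null (t := {h | ¬ ((Matrix.of h).det ≠ 0 → P (Matrix.of h))})
      (fun h ⟨hnot, hpos⟩ hh => hnot ?_) hae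
    rw [Set.mem_ofPred_eq, coe_toUnimodular hpos]
    exact hsmul _ (hh (ne_of_gt hpos)) _ (Real.rpow_pos_of_pos hpos _)
  exact absolutelyContinuous_of_isMulLeftInvariant μ (coneMeasure n) coneMeasure_ne_zero hcone

end Haar

/-- Let `n ≥ 3` and let `Q₀` be a real quadratic form on `ℝ^n` satisfying the volume asymptotic
condition with constant `c₀ > 0`. For every `δ > 0`, for Haar-almost every `g ∈ SL(n,ℝ)` there
is `ε₀ > 0` such that for all `0 < ε < ε₀` there is a nonzero `x ∈ ℤ^n` with
`‖gx‖ < ε^{-(1/(n-2) + δ)}` and `0 < Q₀(gx) < ε`. -/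
theorem small_values_along_orbit
    (n : ℕ) (hn : 3 ≤ n) (M : Matrix (Fin n) (Fin n) ℝ) (hM : M.IsSymm)
    (c₀ : ℝ) (hc₀ : 0 < c₀) (hvol : volumeAsymp M c₀)
    (δ : ℝ) (hδ : 0 < δ)
    (μ : Measure (SLR n)) [μ.IsHaarMeasure] :
    ∀ᵐ g : SLR n ∂μ, ∃ ε₀ : ℝ, 0 < ε₀ ∧
      ∀ ε : ℝ, 0 < ε → ε < ε₀ →
        ∃ x : Fin n → ℤ, x ≠ 0 ∧
          euclNorm ((g : Matrix (Fin n) (Fin n) ℝ).mulVec fun i => (x i : ℝ)) <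
            ε ^ (-(1 / ((n : ℝ) - 2) + δ)) ∧
          0 < Qform M ((g : Matrix (Fin n) (Fin n) ℝ).mulVec fun i => (x i : ℝ)) ∧
          Qform M ((g : Matrix (Fin n) (Fin n) ℝ).mulVec fun i => (x i : ℝ)) < ε := by
  obtain ⟨m, rfl⟩ := Nat.exists_eq_add_of_le' (show 1 ≤ n by omega)
  have hm : (2 : ℝ) ≤ m := mod_cast Nat.le_of_succ_le_succ hn
  have hcast : ((m + 1 : ℕ) : ℝ) - 2 = m - 1 := by
    push_cast
    ring
  rw [hcast]
  have hpos : (0 : ℝ) < m - 1 := by linarith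
  have hβ : 1 < (1 / ((m : ℝ) - 1) + δ / 2) * (m - 1) := by
    rw [add_mul, one_div_mul_cancel hpos.ne']
    exact lt_add_of_pos_right 1 (by positivity)
  have happrox := ae_specialLinearGroup_of_ae μ (measurableSet_isApproximable M _)
    (fun _ hh _ ht => hh.smul ht) (ae_isApproximable (by omega) hc₀ hvol hβ)
  filter_upwards [happrox] with g hg
  obtain ⟨ε₀, hε₀, hsmall⟩ := hg.exists_small_values (γ := 1 / ((m : ℝ) - 1) + δ)
    (by positivity) (by linarith)
  refine ⟨ε₀, hε₀, fun ε hε hεε₀ => ?_⟩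
  obtain ⟨x, hx, hQ0, hQε, hnorm⟩ := hsmall ε hε hεε₀
  exact ⟨x, hx, hnorm, hQ0, hQε⟩
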